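/- arXiv:1909.03667 — 2 statements merged into one kernel-verified Lean document; each statement's English description precedes it below -/
import Mathlib

section
/- (Generalized logarithmic Hardy–Littlewood–Sobolev inequality.) For every α ≥ 0 and every admissible function f on ℝ² with mass M = ∫_{ℝ²} f dx > 0, one has ∫_{ℝ²} f log(f/M) dx + α ∫_{ℝ²} V f dx + M(1−α)(1+log π) ≥ (2/M)(α−1) ∬_{ℝ²×ℝ²} f(x) f(y) log|x−y| dx dy. -/
open MeasureTheory Real Filter

noncomputable section

/-- The Euclidean plane ℝ². -/
abbrev E2 := EuclideanSpace ℝ (Fin 2)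

/-- The probability density μ(x) = 1/(π (1+|x|²)²) on ℝ². -/
def mu2 (x : E2) : ℝ := 1 / (π * (1 + ‖x‖ ^ 2) ^ 2)

/-- The external potential V(x) = −log μ(x) = 2 log(1+|x|²) + log π. -/
def Vpot (x : E2) : ℝ := 2 * Real.log (1 + ‖x‖ ^ 2) + Real.log π

/-- A function f on ℝ² is admissible if it is measurable, nonnegative a.e., integrable,
and ∫ f |log f|, ∫ V f and ∬ f(x) f(y) |log|x−y|| are all finite. -/
def Admissible (f : E2 → ℝ) : Prop :=
  Measurable f ∧ (∀ᵐ x : E2, 0 ≤ f x) ∧ Integrable f ∧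
  Integrable (fun x => f x * |Real.log (f x)|) ∧
  Integrable (fun x => Vpot x * f x) ∧
  Integrable (fun p : E2 × E2 => f p.1 * f p.2 * |Real.log ‖p.1 - p.2‖|)

/-- The repulsive free energy F⁺_β. -/
def Fplus (β : ℝ) (f : E2 → ℝ) : ℝ :=
  (∫ x, f x * Real.log (f x)) + β * (∫ x, Vpot x * f x)
    - (1 / (4 * π)) * ∫ p : E2 × E2, f p.1 * f p.2 * Real.log ‖p.1 - p.2‖

/-- The attractive free energy F⁻_β. -/
def Fminus (β : ℝ) (f : E2 → ℝ) : ℝ :=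
  (∫ x, f x * Real.log (f x)) + β * (∫ x, Vpot x * f x)
    + (1 / (4 * π)) * ∫ p : E2 × E2, f p.1 * f p.2 * Real.log ‖p.1 - p.2‖

namespace LogHLS

/-! ### The chordal kernel and its power series -/

/-- The logarithmic weight `log (1 + |x|²)`. -/
def logWeight (x : E2) : ℝ := Real.log (1 + ‖x‖ ^ 2)

/-- The squared chordal distance of the stereographic images of two points, on the sphere of
diameter one. -/
def chordSq (x y : E2) : ℝ := ‖x - y‖ ^ 2 / ((1 + ‖x‖ ^ 2) * (1 + ‖y‖ ^ 2))

/-- The logarithmic kernel in spherical normalisation, `-log` of the chordal distance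
off the diagonal. -/
def logKernel (x y : E2) : ℝ := (logWeight x + logWeight y) / 2 - Real.log ‖x - y‖

/-- The coordinates of the inverse stereographic projection. -/
def stereo (i : Fin 3) (x : E2) : ℝ :=
  ![2 * x 0 / (1 + ‖x‖ ^ 2), 2 * x 1 / (1 + ‖x‖ ^ 2), (‖x‖ ^ 2 - 1) / (1 + ‖x‖ ^ 2)] i

/-- The point of the complex plane with the same coordinates. -/
def toC (x : E2) : ℂ := ⟨x 0, x 1⟩

lemma one_add_norm_sq_pos (x : E2) : 0 < 1 + ‖x‖ ^ 2 := by positivity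

lemma norm_sq_eq (x : E2) : ‖x‖ ^ 2 = x 0 ^ 2 + x 1 ^ 2 := by
  rw [EuclideanSpace.norm_sq_eq, Fin.sum_univ_two]; simp

lemma logWeight_nonneg (x : E2) : 0 ≤ logWeight x :=
  Real.log_nonneg (by have := sq_nonneg ‖x‖; linarith)

lemma chordSq_nonneg (x y : E2) : 0 ≤ chordSq x y := by unfold chordSq; positivity

lemma chordSq_pos {x y : E2} (h : x ≠ y) : 0 < chordSq x y := by
  have : 0 < ‖x - y‖ := norm_pos_iff.2 (sub_ne_zero.2 h)
  unfold chordSq; positivity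

lemma one_sub_chordSq (x y : E2) :
    1 - chordSq x y = Complex.normSq (1 + toC x * (starRingEnd ℂ) (toC y))
      / ((1 + ‖x‖ ^ 2) * (1 + ‖y‖ ^ 2)) := by
  have hx := one_add_norm_sq_pos x
  have hy := one_add_norm_sq_pos y
  unfold chordSq
  rw [eq_div_iff (by positivity), sub_mul, div_mul_cancel₀ _ (by positivity)]
  simp only [norm_sq_eq, Complex.normSq_apply, toC]
  simp
  ring

lemma chordSq_le_one (x y : E2) : chordSq x y ≤ 1 := by
  have h := one_sub_chordSq x y
  have : 0 ≤ 1 - chordSq x y := by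
    rw [h]; exact div_nonneg (Complex.normSq_nonneg _) (by positivity)
  linarith

lemma logKernel_eq {x y : E2} (h : x ≠ y) :
    logKernel x y = - Real.log (chordSq x y) / 2 := by
  have h0 : ‖x - y‖ ≠ 0 := norm_ne_zero_iff.2 (sub_ne_zero.2 h)
  unfold logKernel chordSq logWeight
  rw [Real.log_div (by positivity) (by positivity), Real.log_mul (by positivity) (by positivity),
    Real.log_pow]
  push_cast; ring

lemma logKernel_nonneg {x y : E2} (h : x ≠ y) : 0 ≤ logKernel x y := by
  rw [logKernel_eq h]
  have := Real.log_nonpos (chordSq_nonneg x y) (chordSq_le_one x y)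
  linarith

lemma sum_stereo_mul (x y : E2) : ∑ i, stereo i x * stereo i y = 1 - 2 * chordSq x y := by
  have hx := one_add_norm_sq_pos x
  have hy := one_add_norm_sq_pos y
  simp only [Fin.sum_univ_three, stereo, chordSq]
  simp only [Matrix.cons_val]
  rw [norm_sq_eq x] at *
  rw [norm_sq_eq y] at *
  rw [norm_sq_eq (x - y)]
  simp only [PiLp.sub_apply]
  field_simp
  ring

lemma sum_stereo_sq (x : E2) : ∑ i, stereo i x ^ 2 = 1 := by
  have := sum_stereo_mul x x
  simpa [chordSq, sq] using this

lemma abs_stereo_le (i : Fin 3) (x : E2) : |stereo i x| ≤ 1 := by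
  rw [← sq_le_one_iff_abs_le_one, ← sum_stereo_sq x]
  exact Finset.single_le_sum (f := fun j => stereo j x ^ 2) (fun j _ => sq_nonneg _)
    (Finset.mem_univ i)

lemma continuous_stereo (i : Fin 3) : Continuous (stereo i) := by
  have h : ∀ x : E2, 1 + ‖x‖ ^ 2 ≠ 0 := fun x => (one_add_norm_sq_pos x).ne'
  fin_cases i <;>
    exact Continuous.div (by fun_prop) (by fun_prop) h

lemma continuous_logWeight : Continuous logWeight :=
  Continuous.log (by fun_prop) fun x => (one_add_norm_sq_pos x).ne'

lemma continuous_chordSq : Continuous fun p : E2 × E2 => chordSq p.1 p.2 :=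
  Continuous.div (by fun_prop) (by fun_prop) fun p => by positivity

/-- Truncations of the power series of `-log (1 - p)` are lower bounds. -/
lemma sum_le_neg_log {s : ℝ} (hs : 0 < s) (hs1 : s ≤ 1) (N : ℕ) :
    ∑ k ∈ Finset.range N, (1 - s) ^ (k + 1) / (k + 1 : ℝ) ≤ - Real.log s := by
  have h := Real.hasSum_pow_div_log_of_abs_lt_one (x := 1 - s)
    (by rw [abs_lt]; constructor <;> linarith)
  have h2 := sum_le_hasSum (Finset.range N)
    (fun i _ => div_nonneg (pow_nonneg (sub_nonneg.2 hs1) _) (by positivity)) h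
  simpa using h2

/-- Truncations of the power series of `(1 - p) log (1 - p)` are lower bounds. -/
lemma sum_le_mul_log {s : ℝ} (hs : 0 < s) (hs1 : s ≤ 1) (N : ℕ) :
    -(1 - s) + ∑ k ∈ Finset.range N, (1 - s) ^ (k + 2) / ((k + 1 : ℝ) * (k + 2))
      ≤ s * Real.log s := by
  have h := Real.hasSum_pow_div_log_of_abs_lt_one (x := 1 - s)
    (by rw [abs_lt]; constructor <;> linarith)
  have h1 := h.mul_left (1 - s)
  have h2 := (hasSum_nat_add_iff' 1).2 h
  have h3 := h1.sub h2
  have h4 := sum_le_hasSum (Finset.range N) (fun i _ => ?_) h3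
  · have e : ∀ k ∈ Finset.range N, (1 - s) * ((1 - s) ^ (k + 1) / (k + 1 : ℝ)) -
        (1 - s) ^ (k + 1 + 1) / (((k + 1 : ℕ) : ℝ) + 1)
        = (1 - s) ^ (k + 2) / ((k + 1 : ℝ) * (k + 2)) := by
      intro k _
      push_cast
      field_simp
      ring
    rw [Finset.sum_congr rfl e] at h4
    simp at h4
    linarith
  · have hp : 0 ≤ 1 - s := sub_nonneg.2 hs1
    push_cast
    have e : (1 - s) * ((1 - s) ^ (i + 1) / (i + 1 : ℝ)) -
        (1 - s) ^ (i + 1 + 1) / ((i : ℝ) + 1 + 1)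
        = (1 - s) ^ (i + 2) / ((i + 1 : ℝ) * (i + 2)) := by
      field_simp
      ring
    rw [e]; positivity

lemma sum_inv_two (N : ℕ) :
    ∑ k ∈ Finset.range N, (1 / ((k + 1 : ℕ) + 1 : ℝ)) / (k + 1 : ℝ) = 1 - 1 / (N + 1 : ℝ) := by
  induction N with
  | zero => simp
  | succ n ih => rw [Finset.sum_range_succ, ih]; push_cast; field_simp; ring

lemma sum_inv_three (N : ℕ) :
    ∑ k ∈ Finset.range N, (1 / ((k + 2 : ℕ) + 1 : ℝ)) / ((k + 1 : ℝ) * (k + 2))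
      = 1 / 4 - 1 / (2 * (N + 1) * (N + 2) : ℝ) := by
  induction N with
  | zero => norm_num
  | succ n ih => rw [Finset.sum_range_succ, ih]; push_cast; field_simp; ring

/-- The second-order bound for the symmetrised entropy. -/
lemma log_one_add_le_cubic {u : ℝ} (hu : -1 < u) :
    Real.log (1 + u) ≤ u - u ^ 2 / 2 + u ^ 3 / 3 := by
  let g : ℝ → ℝ := fun v => v - v ^ 2 / 2 + v ^ 3 / 3 - Real.log (1 + v)
  have hd : ∀ v : ℝ, -1 < v → HasDerivAt g (v ^ 3 / (1 + v)) v := by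
    intro v hv
    have h1 : (1 + v) ≠ 0 := by linarith
    have := (((hasDerivAt_id v).sub ((hasDerivAt_pow 2 v).div_const 2)).add
      ((hasDerivAt_pow 3 v).div_const 3)).sub (((hasDerivAt_id v).const_add 1).log h1)
    refine this.congr_deriv ?_
    simp
    field_simp
    ring
  have hg0 : g 0 = 0 := by simp [g]
  suffices 0 ≤ g u by simp only [g] at this; linarith
  rcases le_total 0 u with h | h
  · have hm : MonotoneOn g (Set.Ici 0) := by
      refine monotoneOn_of_deriv_nonneg (convex_Ici 0) ?_ ?_ ?_
      · intro v hv
        have : (0 : ℝ) ≤ v := hv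
        exact (hd v (by linarith)).continuousAt.continuousWithinAt
      · intro v hv
        rw [interior_Ici] at hv
        have : (0 : ℝ) < v := hv
        exact (hd v (by linarith)).differentiableAt.differentiableWithinAt
      · intro v hv
        rw [interior_Ici] at hv
        have : (0 : ℝ) < v := hv
        rw [(hd v (by linarith)).deriv]
        positivity
    rw [← hg0]
    exact hm Set.self_mem_Ici h h
  · have hm : AntitoneOn g (Set.Ioc (-1) 0) := by
      refine antitoneOn_of_deriv_nonpos (convex_Ioc _ _) ?_ ?_ ?_
      · intro v hv
        exact (hd v hv.1).continuousAt.continuousWithinAt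
      · intro v hv
        rw [interior_Ioc] at hv
        exact (hd v hv.1).differentiableAt.differentiableWithinAt
      · intro v hv
        rw [interior_Ioc] at hv
        rw [(hd v hv.1).deriv]
        have h3 : v ^ 3 ≤ 0 := by
          have := hv.2
          nlinarith [sq_nonneg v]
        exact div_nonpos_of_nonpos_of_nonneg h3 (by linarith [hv.1])
    rw [← hg0]
    exact hm ⟨hu, h⟩ ⟨by norm_num, le_rfl⟩ h

lemma symm_entropy_le {u : ℝ} (hu : |u| ≤ 1 / 2) :
    (1 + u) * Real.log (1 + u) + (1 - u) * Real.log (1 - u) ≤ u ^ 2 + u ^ 4 := by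
  obtain ⟨h1, h2⟩ := abs_le.1 hu
  have a := mul_le_mul_of_nonneg_left (log_one_add_le_cubic (u := u) (by linarith))
    (by linarith : 0 ≤ 1 + u)
  have b := mul_le_mul_of_nonneg_left (log_one_add_le_cubic (u := -u) (by linarith))
    (by linarith : 0 ≤ 1 - u)
  rw [← sub_eq_add_neg] at b
  nlinarith [sq_nonneg (u ^ 2)]

/-- Young's inequality for the entropy. -/
lemma mul_le_entropy_add_exp {a : ℝ} (ha : 0 ≤ a) (b : ℝ) :
    a * b ≤ a * Real.log a - a + Real.exp b := by
  rcases ha.eq_or_lt with rfl | ha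
  · simpa using (Real.exp_pos b).le
  · have h := Real.add_one_le_exp (b - Real.log a)
    rw [Real.exp_sub, Real.exp_log ha, le_div_iff₀ ha] at h
    nlinarith

/-! ### The reference density -/

lemma volume_real_ball : (volume : Measure E2).real (Metric.ball 0 1) = π := by
  rw [Measure.real, EuclideanSpace.volume_ball]
  have : Real.Gamma ((Fintype.card (Fin 2) : ℝ) / 2 + 1) = 1 := by
    norm_num [Real.Gamma_two]
  rw [this]
  simp [Real.pi_pos.le]

lemma finrank_E2 : Module.finrank ℝ E2 = 2 := by simp

lemma integrable_mu2 : Integrable mu2 := by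
  have h := integrable_rpow_neg_one_add_norm_sq (E := E2) (μ := volume) (r := 4)
    (by rw [finrank_E2]; norm_num)
  refine (h.const_mul π⁻¹).congr (Eventually.of_forall fun x => ?_)
  have := one_add_norm_sq_pos x
  simp only [mu2]
  rw [show (-4 / 2 : ℝ) = -(2 : ℕ) by norm_num, Real.rpow_neg this.le, Real.rpow_natCast]
  field_simp

lemma integral_mu2 : ∫ x, mu2 x = 1 := by
  have h := integral_fun_norm_addHaar (volume : Measure E2)
    (fun r : ℝ => 1 / (π * (1 + r ^ 2) ^ 2))
  have h1 : ∫ y in Set.Ioi (0 : ℝ), y * (1 / (π * (1 + y ^ 2) ^ 2)) = 0 - (-(1 / (2 * π))) := by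
    have key := integral_Ioi_of_hasDerivAt_of_nonneg (a := 0) (l := 0)
      (g := fun y : ℝ => -(1 / (2 * π)) * (1 + y ^ 2)⁻¹)
      (g' := fun y : ℝ => y * (1 / (π * (1 + y ^ 2) ^ 2))) ?_ ?_ ?_ ?_
    · simpa using key
    · apply Continuous.continuousWithinAt
      exact continuous_const.mul (Continuous.inv₀ (by fun_prop) fun y => by positivity)
    · intro y _
      have h0 : 1 + y ^ 2 ≠ 0 := by positivity
      have := ((((hasDerivAt_pow 2 y).const_add 1).inv h0).const_mul (-(1 / (2 * π))))
      refine this.congr_deriv ?_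
      have := Real.pi_pos
      field_simp
      simp
    · intro y hy
      have : (0 : ℝ) < y := hy
      positivity
    · have : Tendsto (fun y : ℝ => (1 + y ^ 2)⁻¹) atTop (nhds 0) :=
        tendsto_inv_atTop_zero.comp
          (tendsto_atTop_add_const_left _ _ (tendsto_pow_atTop two_ne_zero))
      simpa using this.const_mul (-(1 / (2 * π)))
  have h2 : ∫ x, mu2 x = Module.finrank ℝ E2 • (volume : Measure E2).real (Metric.ball 0 1) •
      ∫ y in Set.Ioi (0 : ℝ), y ^ (Module.finrank ℝ E2 - 1) • (1 / (π * (1 + y ^ 2) ^ 2)) := h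
  rw [h2, finrank_E2, volume_real_ball]
  simp only [Nat.add_one_sub_one, pow_one, smul_eq_mul, nsmul_eq_mul]
  rw [h1]
  have := Real.pi_pos
  push_cast
  field_simp
  ring

lemma log_mu2 (x : E2) : Real.log (mu2 x) = -(2 * logWeight x + Real.log π) := by
  have := one_add_norm_sq_pos x
  have := Real.pi_pos
  unfold mu2 logWeight
  rw [one_div, Real.log_inv, Real.log_mul (by positivity) (by positivity), Real.log_pow]
  push_cast; ring

lemma mu2_pos (x : E2) : 0 < mu2 x := by
  have := Real.pi_pos
  unfold mu2; positivity

/-! ### Probability densities with finite entropy and energy -/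

/-- Everywhere nonnegative probability densities on the plane with finite entropy, finite
logarithmic moment and finite logarithmic energy. -/
structure Dens (f : E2 → ℝ) : Prop where
  measurable : Measurable f
  nonneg : ∀ x, 0 ≤ f x
  integrable : Integrable f
  mass : ∫ x, f x = 1
  entropy : Integrable fun x => f x * Real.log (f x)
  weight : Integrable fun x => f x * logWeight x
  energy : Integrable fun p : E2 × E2 => f p.1 * f p.2 * Real.log ‖p.1 - p.2‖

lemma ae_fst_ne_snd : ∀ᵐ p : E2 × E2, p.1 ≠ p.2 := by
  have hm : MeasurableSet {p : E2 × E2 | p.1 = p.2} :=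
    (isClosed_eq continuous_fst continuous_snd).measurableSet
  have h0 : (volume : Measure (E2 × E2)) {p : E2 × E2 | p.1 = p.2} = 0 := by
    rw [Measure.volume_eq_prod, Measure.measure_prod_null hm]
    refine Eventually.of_forall fun x => ?_
    have : Prod.mk x ⁻¹' {p : E2 × E2 | p.1 = p.2} = {x} := by ext y; simp [eq_comm]
    simp [this]
  rw [ae_iff]
  simpa using h0

lemma Dens.integrable_pair {f : E2 → ℝ} (hf : Dens f) :
    Integrable fun p : E2 × E2 => f p.1 * f p.2 := by
  rw [Measure.volume_eq_prod]; exact hf.integrable.mul_prod hf.integrable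

lemma integral_pair_mul (g h : E2 → ℝ) :
    ∫ p : E2 × E2, g p.1 * h p.2 = (∫ x, g x) * ∫ x, h x := by
  rw [Measure.volume_eq_prod]; exact integral_prod_mul g h

lemma Dens.integral_pair {f : E2 → ℝ} (hf : Dens f) :
    ∫ p : E2 × E2, f p.1 * f p.2 = 1 := by
  rw [integral_pair_mul, hf.mass, mul_one]

lemma Dens.integrable_pair_mul_bdd {f : E2 → ℝ} (hf : Dens f) {h : E2 × E2 → ℝ}
    (hm : Measurable h) {c : ℝ} (hc : ∀ p, |h p| ≤ c) :
    Integrable fun p : E2 × E2 => f p.1 * f p.2 * h p :=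
  hf.integrable_pair.mul_bdd (c := c) hm.aestronglyMeasurable (Eventually.of_forall hc)

lemma Dens.integrable_mul_bdd {f : E2 → ℝ} (hf : Dens f) {h : E2 → ℝ}
    (hm : Measurable h) {c : ℝ} (hc : ∀ p, |h p| ≤ c) :
    Integrable fun x : E2 => f x * h x :=
  hf.integrable.mul_bdd (c := c) hm.aestronglyMeasurable (Eventually.of_forall hc)

lemma Dens.integrable_weight_fst {f : E2 → ℝ} (hf : Dens f) :
    Integrable fun p : E2 × E2 => f p.1 * f p.2 * logWeight p.1 := by
  have h : Integrable (fun p : E2 × E2 => (f p.1 * logWeight p.1) * f p.2)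
      (volume.prod volume) := hf.weight.mul_prod hf.integrable
  rw [← Measure.volume_eq_prod] at h
  exact h.congr (Eventually.of_forall fun p => by ring)

lemma Dens.integrable_weight_snd {f : E2 → ℝ} (hf : Dens f) :
    Integrable fun p : E2 × E2 => f p.1 * f p.2 * logWeight p.2 := by
  have h : Integrable (fun p : E2 × E2 => f p.1 * (f p.2 * logWeight p.2))
      (volume.prod volume) := hf.integrable.mul_prod hf.weight
  rw [← Measure.volume_eq_prod] at h
  exact h.congr (Eventually.of_forall fun p => by ring)

lemma Dens.integrable_kernel {f : E2 → ℝ} (hf : Dens f) :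
    Integrable fun p : E2 × E2 => f p.1 * f p.2 * logKernel p.1 p.2 := by
  refine (((hf.integrable_weight_fst.add hf.integrable_weight_snd).div_const 2).sub
    hf.energy).congr (Eventually.of_forall fun p => ?_)
  simp only [Pi.add_apply, Pi.sub_apply, logKernel]
  ring

/-- The logarithmic energy in spherical normalisation. -/
def sphEnergy (f : E2 → ℝ) : ℝ := ∫ p : E2 × E2, f p.1 * f p.2 * logKernel p.1 p.2

lemma Dens.sphEnergy_eq {f : E2 → ℝ} (hf : Dens f) :
    sphEnergy f = (∫ x, f x * logWeight x)
      - ∫ p : E2 × E2, f p.1 * f p.2 * Real.log ‖p.1 - p.2‖ := by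
  have h1 : ∫ p : E2 × E2, f p.1 * f p.2 * logWeight p.1 = ∫ x, f x * logWeight x := by
    have := integral_pair_mul (fun x => f x * logWeight x) f
    rw [hf.mass, mul_one] at this
    rw [← this]
    exact integral_congr_ae (Eventually.of_forall fun p => by ring)
  have h2 : ∫ p : E2 × E2, f p.1 * f p.2 * logWeight p.2 = ∫ x, f x * logWeight x := by
    have := integral_pair_mul f (fun x => f x * logWeight x)
    rw [hf.mass, one_mul] at this
    rw [← this]
    exact integral_congr_ae (Eventually.of_forall fun p => by ring)
  have h3 : sphEnergy f = ∫ p : E2 × E2, ((f p.1 * f p.2 * logWeight p.1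
      + f p.1 * f p.2 * logWeight p.2) / 2 - f p.1 * f p.2 * Real.log ‖p.1 - p.2‖) := by
    refine integral_congr_ae (Eventually.of_forall fun p => ?_)
    simp only [logKernel]
    ring
  have h4 : Integrable fun p : E2 × E2 => (f p.1 * f p.2 * logWeight p.1
      + f p.1 * f p.2 * logWeight p.2) / 2 :=
    (hf.integrable_weight_fst.add hf.integrable_weight_snd).div_const 2
  rw [h3, integral_sub h4 hf.energy, integral_div,
    integral_add hf.integrable_weight_fst hf.integrable_weight_snd, h1, h2]
  ring

/-! ### Moments of the overlap of two independent points -/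

/-- Spin coherent state components of degree `k`. -/
def coherent (k j : ℕ) (x : E2) : ℂ :=
  (√(k.choose j) : ℂ) * toC x ^ j / ((√(1 + ‖x‖ ^ 2) ^ k : ℝ) : ℂ)

lemma continuous_toC : Continuous toC := by
  have : toC = fun x : E2 => (x 0 : ℂ) + (x 1 : ℂ) * Complex.I := by
    ext x
    apply Complex.ext <;> simp [toC]
  rw [this]; fun_prop

lemma continuous_coherent (k j : ℕ) : Continuous (coherent k j) := by
  unfold coherent
  have := continuous_toC
  refine Continuous.div (by fun_prop) (by fun_prop) fun x => ?_
  have := one_add_norm_sq_pos x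
  exact_mod_cast (by positivity : (√(1 + ‖x‖ ^ 2) ^ k : ℝ) ≠ 0)

lemma sum_coherent_mul (k : ℕ) (x y : E2) :
    ∑ j ∈ Finset.range (k + 1), coherent k j x * (starRingEnd ℂ) (coherent k j y)
      = (1 + toC x * (starRingEnd ℂ) (toC y)) ^ k
        / ((√(1 + ‖x‖ ^ 2) ^ k : ℝ) * (√(1 + ‖y‖ ^ 2) ^ k : ℝ) : ℂ) := by
  rw [add_comm (1 : ℂ), add_pow, Finset.sum_div]
  refine Finset.sum_congr rfl fun j _ => ?_
  have hc : ((√(k.choose j) : ℝ) : ℂ) * ((√(k.choose j) : ℝ) : ℂ) = (k.choose j : ℂ) := by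
    rw [← Complex.ofReal_mul, Real.mul_self_sqrt (by positivity)]; simp
  simp only [coherent, map_div₀, map_mul, map_pow, Complex.conj_ofReal]
  rw [div_mul_div_comm, ← hc, one_pow, mul_pow]
  ring

lemma normSq_sum_coherent (k : ℕ) (x y : E2) :
    ∑ j ∈ Finset.range (k + 1), ∑ l ∈ Finset.range (k + 1),
      (coherent k j x * (starRingEnd ℂ) (coherent k l x))
        * (starRingEnd ℂ) (coherent k j y * (starRingEnd ℂ) (coherent k l y))
      = (((1 - chordSq x y) ^ k : ℝ) : ℂ) := by
  have hx := one_add_norm_sq_pos x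
  have hy := one_add_norm_sq_pos y
  have h1 := sum_coherent_mul k x y
  have e : (((1 - chordSq x y) ^ k : ℝ) : ℂ) =
      (∑ j ∈ Finset.range (k + 1), coherent k j x * (starRingEnd ℂ) (coherent k j y))
      * (starRingEnd ℂ)
        (∑ l ∈ Finset.range (k + 1), coherent k l x * (starRingEnd ℂ) (coherent k l y)) := by
    rw [Complex.mul_conj, h1, map_div₀, one_sub_chordSq, div_pow, map_pow]
    congr 2
    rw [← Complex.ofReal_mul, Complex.normSq_ofReal]
    rw [mul_mul_mul_comm, ← mul_pow, ← mul_pow, Real.mul_self_sqrt hx.le, Real.mul_self_sqrt hy.le,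
      mul_pow]
  rw [e, map_sum, Finset.sum_mul_sum]
  refine Finset.sum_congr rfl fun j _ => Finset.sum_congr rfl fun l _ => ?_
  simp only [map_mul, Complex.conj_conj]
  ring

lemma sum_normSq_coherent (k : ℕ) (x : E2) :
    ∑ j ∈ Finset.range (k + 1), ‖coherent k j x‖ ^ 2 = 1 := by
  have hx := one_add_norm_sq_pos x
  have h := sum_coherent_mul k x x
  have hz : 1 + toC x * (starRingEnd ℂ) (toC x) = ((1 + ‖x‖ ^ 2 : ℝ) : ℂ) := by
    rw [Complex.mul_conj, norm_sq_eq, Complex.normSq_apply]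
    simp only [toC]
    push_cast; ring
  rw [hz, ← Complex.ofReal_mul, ← mul_pow, Real.mul_self_sqrt hx.le, ← Complex.ofReal_pow,
    div_self (by exact_mod_cast (by positivity : (1 + ‖x‖ ^ 2) ^ k ≠ 0))] at h
  simp only [Complex.mul_conj, Complex.normSq_eq_norm_sq] at h
  exact_mod_cast h

lemma norm_coherent_le {k j : ℕ} (hj : j ∈ Finset.range (k + 1)) (x : E2) :
    ‖coherent k j x‖ ≤ 1 := by
  have := Finset.single_le_sum (f := fun j => ‖coherent k j x‖ ^ 2) (fun j _ => sq_nonneg _) hj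
  rw [sum_normSq_coherent] at this
  exact (sq_le_one_iff₀ (norm_nonneg _)).1 this

/-- The purity of a mixed state on a space of dimension `k + 1` is at least `1 / (k + 1)`. -/
lemma Dens.overlap_moment_ge {f : E2 → ℝ} (hf : Dens f) (k : ℕ) :
    1 / (k + 1 : ℝ) ≤ ∫ p : E2 × E2, f p.1 * f p.2 * (1 - chordSq p.1 p.2) ^ k := by
  classical
  let S := Finset.range (k + 1)
  let A : ℕ → ℕ → E2 → ℂ := fun j l x =>
    (f x : ℂ) * (coherent k j x * (starRingEnd ℂ) (coherent k l x))
  have hfC : Integrable fun x => (f x : ℂ) := hf.integrable.ofReal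
  have hA : ∀ j ∈ S, ∀ l ∈ S, Integrable (A j l) := by
    intro j hj l hl
    refine hfC.mul_bdd (c := 1) ?_ (Eventually.of_forall fun x => ?_)
    · have h1 := continuous_coherent k j
      have h2 := continuous_coherent k l
      exact (h1.mul (Complex.continuous_conj.comp h2)).aestronglyMeasurable
    · rw [norm_mul, RCLike.norm_conj]
      exact mul_le_one₀ (norm_coherent_le hj x) (norm_nonneg _) (norm_coherent_le hl x)
  have hcongr : ∀ p : E2 × E2, ((f p.1 * f p.2 * (1 - chordSq p.1 p.2) ^ k : ℝ) : ℂ)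
      = ∑ j ∈ S, ∑ l ∈ S, A j l p.1 * (starRingEnd ℂ) (A j l p.2) := by
    intro p
    rw [Complex.ofReal_mul, ← normSq_sum_coherent, Finset.mul_sum]
    refine Finset.sum_congr rfl fun j _ => ?_
    rw [Finset.mul_sum]
    refine Finset.sum_congr rfl fun l _ => ?_
    simp only [A, map_mul, Complex.conj_ofReal, Complex.ofReal_mul]
    ring
  have hAc : ∀ j ∈ S, ∀ l ∈ S, Integrable fun p : E2 × E2 =>
      A j l p.1 * (starRingEnd ℂ) (A j l p.2) := by
    intro j hj l hl
    rw [Measure.volume_eq_prod]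
    refine (hA j hj l hl).mul_prod (g := fun y => (starRingEnd ℂ) (A j l y)) ?_
    exact Complex.conjCLE.toContinuousLinearMap.integrable_comp (hA j hj l hl)
  have hck : ((∫ p : E2 × E2, f p.1 * f p.2 * (1 - chordSq p.1 p.2) ^ k : ℝ) : ℂ)
      = ((∑ j ∈ S, ∑ l ∈ S, ‖∫ x, A j l x‖ ^ 2 : ℝ) : ℂ) := by
    rw [← integral_complex_ofReal, integral_congr_ae (Eventually.of_forall hcongr),
      integral_finsetSum _ fun j hj => integrable_finsetSum _ fun l hl => hAc j hj l hl]
    push_cast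
    refine Finset.sum_congr rfl fun j hj => ?_
    rw [integral_finsetSum _ fun l hl => hAc j hj l hl]
    refine Finset.sum_congr rfl fun l hl => ?_
    rw [Measure.volume_eq_prod,
      integral_prod_mul (A j l) (fun y => (starRingEnd ℂ) (A j l y)), integral_conj,
      Complex.mul_conj, Complex.normSq_eq_norm_sq]
    push_cast; rfl
  rw [Complex.ofReal_inj.1 hck]
  let q : ℕ → ℝ := fun j => ∫ x, f x * ‖coherent k j x‖ ^ 2
  have hdiag : ∀ j, ∫ x, A j j x = (q j : ℂ) := by
    intro j
    rw [← integral_complex_ofReal]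
    refine integral_congr_ae (Eventually.of_forall fun x => ?_)
    simp only [A, Complex.mul_conj, Complex.normSq_eq_norm_sq]
    push_cast; rfl
  have hsumq : ∑ j ∈ S, q j = 1 := by
    rw [← hf.mass, ← integral_finsetSum]
    · refine integral_congr_ae (Eventually.of_forall fun x => ?_)
      simp only [S]
      rw [← Finset.mul_sum, sum_normSq_coherent, mul_one]
    · intro j hj
      refine hf.integrable_mul_bdd (c := 1)
        (((continuous_coherent k j).norm.pow 2).measurable) fun x => ?_
      rw [abs_of_nonneg (by positivity)]
      exact pow_le_one₀ (norm_nonneg _) (norm_coherent_le hj x)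
  have hcs := sq_sum_le_card_mul_sum_sq (s := S) (f := q)
  rw [hsumq] at hcs
  have hcard : (S.card : ℝ) = k + 1 := by simp [S]
  rw [hcard] at hcs
  have hle : ∑ j ∈ S, q j ^ 2 ≤ ∑ j ∈ S, ∑ l ∈ S, ‖∫ x, A j l x‖ ^ 2 := by
    refine Finset.sum_le_sum fun j hj => ?_
    refine le_trans (le_of_eq ?_) (Finset.single_le_sum (f := fun l => ‖∫ x, A j l x‖ ^ 2)
      (fun l _ => sq_nonneg _) hj)
    simp only [hdiag, Complex.norm_real, Real.norm_eq_abs, sq_abs]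
  rw [div_le_iff₀ (by positivity)]
  nlinarith [hcs, hle]

lemma Dens.integrable_overlap {f : E2 → ℝ} (hf : Dens f) (k : ℕ) :
    Integrable fun p : E2 × E2 => f p.1 * f p.2 * (1 - chordSq p.1 p.2) ^ k := by
  refine hf.integrable_pair_mul_bdd (c := 1)
    ((continuous_const.sub continuous_chordSq).pow k).measurable fun p => ?_
  have h0 := chordSq_nonneg p.1 p.2
  have h1 := chordSq_le_one p.1 p.2
  rw [abs_of_nonneg (pow_nonneg (by linarith) _)]
  exact pow_le_one₀ (by linarith) (by linarith)

lemma Dens.half_le_sphEnergy {f : E2 → ℝ} (hf : Dens f) : 1 / 2 ≤ sphEnergy f := by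
  have key : ∀ N : ℕ, (1 - 1 / (N + 1 : ℝ)) / 2 ≤ sphEnergy f := by
    intro N
    have hle : ∫ p : E2 × E2, ∑ k ∈ Finset.range N,
        f p.1 * f p.2 * (1 - chordSq p.1 p.2) ^ (k + 1) * (1 / (k + 1 : ℝ) / 2)
        ≤ sphEnergy f := by
      refine integral_mono_ae (integrable_finsetSum _ fun k _ =>
        (hf.integrable_overlap (k + 1)).mul_const _) hf.integrable_kernel ?_
      filter_upwards [ae_fst_ne_snd] with p hp
      rw [logKernel_eq hp]
      have h := sum_le_neg_log (chordSq_pos hp) (chordSq_le_one _ _) N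
      have h2 := mul_le_mul_of_nonneg_left h
        (mul_nonneg (hf.nonneg p.1) (hf.nonneg p.2))
      rw [Finset.mul_sum] at h2
      have e : ∑ k ∈ Finset.range N,
          f p.1 * f p.2 * (1 - chordSq p.1 p.2) ^ (k + 1) * (1 / (k + 1 : ℝ) / 2)
          = (∑ k ∈ Finset.range N,
            f p.1 * f p.2 * ((1 - chordSq p.1 p.2) ^ (k + 1) / (k + 1 : ℝ))) / 2 := by
        rw [Finset.sum_div]
        exact Finset.sum_congr rfl fun k _ => by ring
      rw [e]
      linarith
    refine le_trans ?_ hle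
    rw [integral_finsetSum _ fun k _ => (hf.integrable_overlap (k + 1)).mul_const _,
      ← sum_inv_two, Finset.sum_div]
    refine Finset.sum_le_sum fun k _ => ?_
    rw [integral_mul_const]
    have := mul_le_mul_of_nonneg_right (hf.overlap_moment_ge (k + 1))
      (by positivity : 0 ≤ 1 / (k + 1 : ℝ) / 2)
    refine le_trans (le_of_eq ?_) this
    ring
  have ht : Tendsto (fun N : ℕ => (1 - 1 / (N + 1 : ℝ)) / 2) atTop (nhds ((1 - 0) / 2)) :=
    (tendsto_const_nhds.sub tendsto_one_div_add_atTop_nhds_zero_nat).div_const 2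
  rw [sub_zero] at ht
  exact le_of_tendsto' ht key

/-- The centre of mass of the stereographic image. -/
def center (f : E2 → ℝ) (i : Fin 3) : ℝ := ∫ x, f x * stereo i x

lemma Dens.integrable_stereo {f : E2 → ℝ} (hf : Dens f) (i : Fin 3) :
    Integrable fun x => f x * stereo i x :=
  hf.integrable_mul_bdd (continuous_stereo i).measurable (abs_stereo_le i)

lemma Dens.integrable_stereo_mul {f : E2 → ℝ} (hf : Dens f) (i : Fin 3) :
    Integrable fun p : E2 × E2 => f p.1 * f p.2 * (stereo i p.1 * stereo i p.2) := by
  have h1 := (continuous_stereo i).measurable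
  refine hf.integrable_pair_mul_bdd (c := 1) (by fun_prop) fun p => ?_
  rw [abs_mul]
  exact mul_le_one₀ (abs_stereo_le i _) (abs_nonneg _) (abs_stereo_le i _)

lemma Dens.integral_stereo_mul {f : E2 → ℝ} (i : Fin 3) :
    ∫ p : E2 × E2, f p.1 * f p.2 * (stereo i p.1 * stereo i p.2) = center f i ^ 2 := by
  rw [sq, center, ← integral_pair_mul]
  exact integral_congr_ae (Eventually.of_forall fun p => by ring)

lemma Dens.integral_overlap {f : E2 → ℝ} (hf : Dens f) :
    ∫ p : E2 × E2, f p.1 * f p.2 * (1 - chordSq p.1 p.2)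
      = (1 + ∑ i, center f i ^ 2) / 2 := by
  have e : ∀ p : E2 × E2, f p.1 * f p.2 * (1 - chordSq p.1 p.2)
      = (f p.1 * f p.2 + ∑ i, f p.1 * f p.2 * (stereo i p.1 * stereo i p.2)) / 2 := by
    intro p
    rw [← Finset.mul_sum, sum_stereo_mul]; ring
  rw [integral_congr_ae (Eventually.of_forall e), integral_div,
    integral_add hf.integrable_pair (integrable_finsetSum _ fun i _ => hf.integrable_stereo_mul i),
    hf.integral_pair, integral_finsetSum _ fun i _ => hf.integrable_stereo_mul i]
  simp only [Dens.integral_stereo_mul]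

lemma Dens.chordSq_mul_kernel_le {f : E2 → ℝ} (hf : Dens f)
    (hck : Integrable fun p : E2 × E2 => f p.1 * f p.2 * (2 * chordSq p.1 p.2
      * logKernel p.1 p.2)) :
    ∫ p : E2 × E2, f p.1 * f p.2 * (2 * chordSq p.1 p.2 * logKernel p.1 p.2)
      ≤ 1 / 4 + (∑ i, center f i ^ 2) / 2 := by
  have key : ∀ N : ℕ, ∫ p : E2 × E2, f p.1 * f p.2 * (2 * chordSq p.1 p.2 * logKernel p.1 p.2)
      ≤ (1 + ∑ i, center f i ^ 2) / 2 - (1 / 4 - 1 / (2 * (N + 1) * (N + 2) : ℝ)) := by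
    intro N
    have hI1 := hf.integrable_overlap 1
    simp only [pow_one] at hI1
    have hI2 : Integrable fun p : E2 × E2 => ∑ k ∈ Finset.range N,
        f p.1 * f p.2 * (1 - chordSq p.1 p.2) ^ (k + 2) * (1 / ((k + 1 : ℝ) * (k + 2))) :=
      integrable_finsetSum _ fun k _ => (hf.integrable_overlap (k + 2)).mul_const _
    have hle : ∫ p : E2 × E2, f p.1 * f p.2 * (2 * chordSq p.1 p.2 * logKernel p.1 p.2)
        ≤ ∫ p : E2 × E2, (f p.1 * f p.2 * (1 - chordSq p.1 p.2) - ∑ k ∈ Finset.range N,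
        f p.1 * f p.2 * (1 - chordSq p.1 p.2) ^ (k + 2) * (1 / ((k + 1 : ℝ) * (k + 2)))) := by
      refine integral_mono_ae hck (hI1.sub hI2) ?_
      filter_upwards [ae_fst_ne_snd] with p hp
      rw [logKernel_eq hp]
      have h := sum_le_mul_log (chordSq_pos hp) (chordSq_le_one _ _) N
      have h2 := mul_le_mul_of_nonneg_left h
        (mul_nonneg (hf.nonneg p.1) (hf.nonneg p.2))
      rw [mul_add, Finset.mul_sum] at h2
      have e : ∑ k ∈ Finset.range N,
          f p.1 * f p.2 * (1 - chordSq p.1 p.2) ^ (k + 2) * (1 / ((k + 1 : ℝ) * (k + 2)))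
          = ∑ k ∈ Finset.range N,
            f p.1 * f p.2 * ((1 - chordSq p.1 p.2) ^ (k + 2) / ((k + 1 : ℝ) * (k + 2))) :=
        Finset.sum_congr rfl fun k _ => by ring
      rw [e]
      linarith
    refine le_trans hle ?_
    rw [integral_sub hI1 hI2, hf.integral_overlap, ← sum_inv_three,
      integral_finsetSum _ fun k _ => (hf.integrable_overlap (k + 2)).mul_const _]
    refine sub_le_sub_left (Finset.sum_le_sum fun k _ => ?_) _
    rw [integral_mul_const]
    have := mul_le_mul_of_nonneg_right (hf.overlap_moment_ge (k + 2))
      (by positivity : 0 ≤ 1 / ((k + 1 : ℝ) * (k + 2)))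
    refine le_trans (le_of_eq ?_) this
    ring
  have ht0 : Tendsto (fun N : ℕ => 1 / (2 * (N + 1) * (N + 2) : ℝ)) atTop (nhds 0) := by
    refine squeeze_zero (fun N => by positivity) (fun N => ?_)
      tendsto_one_div_add_atTop_nhds_zero_nat
    have : (0 : ℝ) ≤ N := Nat.cast_nonneg N
    exact one_div_le_one_div_of_le (by positivity) (by nlinarith)
  have ht : Tendsto (fun N : ℕ => (1 + ∑ i, center f i ^ 2) / 2
      - (1 / 4 - 1 / (2 * (N + 1) * (N + 2) : ℝ))) atTop
      (nhds ((1 + ∑ i, center f i ^ 2) / 2 - (1 / 4 - 0))) :=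
    tendsto_const_nhds.sub (tendsto_const_nhds.sub ht0)
  have := ge_of_tendsto' ht key
  linarith

/-! ### The subcritical free energy -/

/-- The free energy interpolating between the conformally invariant functional (`lam = 1`) and
the relative entropy (`lam = 0`). -/
def freeEnergy (lam : ℝ) (f : E2 → ℝ) : ℝ :=
  (∫ x, f x * Real.log (f x)) + 2 * (1 - lam) * (∫ x, f x * logWeight x)
    + 2 * lam * ∫ p : E2 × E2, f p.1 * f p.2 * Real.log ‖p.1 - p.2‖

/-- The entropy relative to `mu2`. -/
def relEntropy (f : E2 → ℝ) : ℝ :=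
  (∫ x, f x * Real.log (f x)) + 2 * (∫ x, f x * logWeight x) + Real.log π

lemma Dens.freeEnergy_eq {f : E2 → ℝ} (hf : Dens f) (lam : ℝ) :
    freeEnergy lam f + Real.log π = relEntropy f - 2 * lam * sphEnergy f := by
  rw [hf.sphEnergy_eq, freeEnergy, relEntropy]; ring

/-- Gibbs' variational inequality. -/
lemma Dens.integral_mul_le {f : E2 → ℝ} (hf : Dens f) {b : E2 → ℝ}
    (hb : Integrable fun x => f x * b x) (he : Integrable fun x => mu2 x * Real.exp (b x)) :
    ∫ x, f x * b x ≤ relEntropy f - 1 + ∫ x, mu2 x * Real.exp (b x) := by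
  have h1 : ∀ x, f x * b x ≤ f x * Real.log (f x) + 2 * (f x * logWeight x)
      + f x * Real.log π - f x + mu2 x * Real.exp (b x) := by
    intro x
    have h := mul_le_entropy_add_exp (hf.nonneg x) (b x + Real.log (mu2 x))
    rw [Real.exp_add, Real.exp_log (mu2_pos x), log_mu2] at h
    linarith
  have i1 : Integrable fun x => f x * Real.log (f x) + 2 * (f x * logWeight x) :=
    hf.entropy.add (hf.weight.const_mul 2)
  have i2 : Integrable fun x => f x * Real.log (f x) + 2 * (f x * logWeight x)
      + f x * Real.log π := i1.add (hf.integrable.mul_const _)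
  have i3 : Integrable fun x => f x * Real.log (f x) + 2 * (f x * logWeight x)
      + f x * Real.log π - f x := i2.sub hf.integrable
  refine (integral_mono hb (i3.add he) h1).trans (le_of_eq ?_)
  simp only [Pi.add_apply]
  rw [integral_add i3 he, integral_sub i2 hf.integrable,
    integral_add i1 (hf.integrable.mul_const _),
    integral_add hf.entropy (hf.weight.const_mul 2), integral_const_mul, integral_mul_const,
    hf.mass, relEntropy]
  ring

lemma Dens.relEntropy_nonneg {f : E2 → ℝ} (hf : Dens f) : 0 ≤ relEntropy f := by
  have := hf.integral_mul_le (b := 0) (by simp) (by simpa using integrable_mu2)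
  simp only [Pi.zero_apply, mul_zero, integral_zero, Real.exp_zero, mul_one, integral_mu2] at this
  linarith

/-! ### Affine images -/

section Affine

variable {E : Type*} [NormedAddCommGroup E] [NormedSpace ℝ E] [MeasurableSpace E] [BorelSpace E]
  [FiniteDimensional ℝ E] (μ : Measure E) [μ.IsAddHaarMeasure]

lemma integral_comp_affine (g : E → ℝ) {r : ℝ} (hr : 0 < r) (v : E) :
    ∫ x, g (r⁻¹ • (x - v)) ∂μ = r ^ Module.finrank ℝ E * ∫ x, g x ∂μ := by
  rw [integral_sub_right_eq_self (fun x => g (r⁻¹ • x)) v, Measure.integral_comp_inv_smul,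
    abs_of_pos (by positivity), smul_eq_mul]

lemma integrable_comp_affine {g : E → ℝ} (hg : Integrable g μ) {r : ℝ} (hr : 0 < r) (v : E) :
    Integrable (fun x => g (r⁻¹ • (x - v))) μ :=
  (hg.comp_smul (inv_ne_zero hr.ne')).comp_sub_right v

end Affine

/-- The image of a density under `x ↦ r x + v`. -/
def affineImage (r : ℝ) (v : E2) (f : E2 → ℝ) (x : E2) : ℝ := (r ^ 2)⁻¹ * f (r⁻¹ • (x - v))

lemma affine_inv {r : ℝ} (hr : 0 < r) (v x : E2) : r • (r⁻¹ • (x - v)) + v = x := by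
  rw [smul_inv_smul₀ hr.ne']; simp

lemma affineImage_mul_eq {r : ℝ} (hr : 0 < r) (v : E2) (f h : E2 → ℝ) (x : E2) :
    affineImage r v f x * h x
      = (fun y => (r ^ 2)⁻¹ * (f y * h (r • y + v))) (r⁻¹ • (x - v)) := by
  simp only [affine_inv hr, affineImage]; ring

lemma integral_affineImage_mul {r : ℝ} (hr : 0 < r) (v : E2) (f h : E2 → ℝ) :
    ∫ x, affineImage r v f x * h x = ∫ y, f y * h (r • y + v) := by
  rw [integral_congr_ae (Eventually.of_forall (affineImage_mul_eq hr v f h))]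
  refine (integral_comp_affine volume (fun y => (r ^ 2)⁻¹ * (f y * h (r • y + v))) hr v).trans ?_
  rw [finrank_E2, integral_const_mul]
  field_simp

lemma integrable_affineImage_mul {r : ℝ} (hr : 0 < r) (v : E2) {f h : E2 → ℝ}
    (hi : Integrable fun y => f y * h (r • y + v)) :
    Integrable fun x => affineImage r v f x * h x :=
  (integrable_comp_affine volume (hi.const_mul (r ^ 2)⁻¹) hr v).congr
    (Eventually.of_forall fun x => (affineImage_mul_eq hr v f h x).symm)

lemma affineImage_mul_log {r : ℝ} (hr : 0 < r) (v : E2) (f : E2 → ℝ) (x : E2) :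
    affineImage r v f x * Real.log (affineImage r v f x)
      = affineImage r v f x * (Real.log (f (r⁻¹ • (x - v))) - 2 * Real.log r) := by
  unfold affineImage
  by_cases h : f (r⁻¹ • (x - v)) = 0
  · simp [h]
  · rw [Real.log_mul (by positivity) h, Real.log_inv, Real.log_pow]
    push_cast; ring

lemma affine_inv_left {r : ℝ} (hr : 0 < r) (v y : E2) : r⁻¹ • (r • y + v - v) = y := by
  simp [hr.ne']

lemma affineImage_pair_eq {r : ℝ} (hr : 0 < r) (v : E2) (f : E2 → ℝ) {p : E2 × E2}
    (hp : p.1 ≠ p.2) :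
    affineImage r v f p.1 * affineImage r v f p.2 * Real.log ‖p.1 - p.2‖
      = (fun q : E2 × E2 => (r ^ 4)⁻¹ * (f q.1 * f q.2 * Real.log ‖q.1 - q.2‖
          + f q.1 * f q.2 * Real.log r)) (r⁻¹ • (p - (v, v))) := by
  have h0 : ‖p.1 - p.2‖ ≠ 0 := norm_ne_zero_iff.2 (sub_ne_zero.2 hp)
  have h1 : ‖(r⁻¹ • (p - (v, v))).1 - (r⁻¹ • (p - (v, v))).2‖ = r⁻¹ * ‖p.1 - p.2‖ := by
    simp only [Prod.smul_fst, Prod.smul_snd, Prod.fst_sub, Prod.snd_sub]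
    rw [← smul_sub, norm_smul, Real.norm_eq_abs, abs_of_pos (inv_pos.2 hr),
      sub_sub_sub_cancel_right]
  simp only [h1]
  rw [Real.log_mul (inv_ne_zero hr.ne') h0, Real.log_inv]
  simp only [affineImage, Prod.smul_fst, Prod.smul_snd, Prod.fst_sub, Prod.snd_sub]
  field_simp
  ring

lemma finrank_E2_prod : Module.finrank ℝ (E2 × E2) = 4 := by
  rw [Module.finrank_prod, finrank_E2]

lemma logWeight_affine_le (r : ℝ) (v y : E2) :
    logWeight (r • y + v) ≤ Real.log (1 + 2 * r ^ 2 + 2 * ‖v‖ ^ 2) + logWeight y := by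
  unfold logWeight
  rw [← Real.log_mul (by positivity) (by positivity)]
  refine Real.log_le_log (by positivity) ?_
  have h1 : ‖r • y + v‖ ≤ |r| * ‖y‖ + ‖v‖ := by
    refine (norm_add_le _ _).trans ?_
    rw [norm_smul, Real.norm_eq_abs]
  have h2 : ‖r • y + v‖ ^ 2 ≤ 2 * (r ^ 2 * ‖y‖ ^ 2) + 2 * ‖v‖ ^ 2 := by
    have h3 : ‖r • y + v‖ ^ 2 ≤ (|r| * ‖y‖ + ‖v‖) ^ 2 := pow_le_pow_left₀ (norm_nonneg _) h1 2
    have h4 : |r| ^ 2 = r ^ 2 := sq_abs r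
    nlinarith [sq_nonneg (|r| * ‖y‖ - ‖v‖)]
  nlinarith [sq_nonneg ‖v‖, sq_nonneg r, mul_nonneg (sq_nonneg ‖v‖) (sq_nonneg ‖y‖),
    sq_nonneg ‖y‖]

lemma Dens.integrable_weight_affine {f : E2 → ℝ} (hf : Dens f) (r : ℝ) (v : E2) :
    Integrable fun y => f y * logWeight (r • y + v) := by
  refine Integrable.mono' ((hf.integrable.mul_const
    (Real.log (1 + 2 * r ^ 2 + 2 * ‖v‖ ^ 2))).add hf.weight) ?_ (Eventually.of_forall fun y => ?_)
  · have h1 := hf.measurable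
    have h2 := continuous_logWeight.measurable
    exact (by fun_prop : Measurable fun y => f y * logWeight (r • y + v)).aestronglyMeasurable
  · rw [Real.norm_eq_abs, abs_of_nonneg (mul_nonneg (hf.nonneg y) (logWeight_nonneg _))]
    have := mul_le_mul_of_nonneg_left (logWeight_affine_le r v y) (hf.nonneg y)
    simp only [Pi.add_apply]
    linarith

lemma Dens.affineImage {f : E2 → ℝ} (hf : Dens f) {r : ℝ} (hr : 0 < r) (v : E2) :
    Dens (affineImage r v f) where
  measurable := by
    have := hf.measurable
    unfold LogHLS.affineImage
    fun_prop
  nonneg x := mul_nonneg (by positivity) (hf.nonneg _)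
  integrable := (integrable_comp_affine volume hf.integrable hr v).const_mul _
  mass := by
    have := integral_affineImage_mul hr v f (fun _ => 1)
    simpa [hf.mass] using this
  entropy := by
    refine (integrable_affineImage_mul (f := f)
      (h := fun x => Real.log (f (r⁻¹ • (x - v))) - 2 * Real.log r) hr v ?_).congr
      (Eventually.of_forall fun x => (affineImage_mul_log hr v f x).symm)
    simp only [affine_inv_left hr, mul_sub]
    exact hf.entropy.sub (hf.integrable.mul_const _)
  weight := integrable_affineImage_mul hr v (hf.integrable_weight_affine r v)
  energy := by
    have h0 : Integrable fun q : E2 × E2 => (r ^ 4)⁻¹ * (f q.1 * f q.2 * Real.log ‖q.1 - q.2‖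
          + f q.1 * f q.2 * Real.log r) :=
      (hf.energy.add (hf.integrable_pair.mul_const (Real.log r))).const_mul _
    rw [Measure.volume_eq_prod] at h0 ⊢
    refine (integrable_comp_affine _ h0 hr (v, v)).congr ?_
    rw [← Measure.volume_eq_prod]
    filter_upwards [ae_fst_ne_snd] with p hp
    exact (affineImage_pair_eq hr v f hp).symm

lemma Dens.freeEnergy_affineImage {f : E2 → ℝ} (hf : Dens f) {r : ℝ} (hr : 0 < r) (v : E2)
    (lam : ℝ) :
    freeEnergy lam (LogHLS.affineImage r v f) = freeEnergy lam f
      + (1 - lam) * (2 * (∫ y, f y * (logWeight (r • y + v) - logWeight y))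
        - 2 * Real.log r) := by
  have h1 : ∫ x, LogHLS.affineImage r v f x * Real.log (LogHLS.affineImage r v f x)
      = (∫ x, f x * Real.log (f x)) - 2 * Real.log r := by
    rw [integral_congr_ae (Eventually.of_forall (affineImage_mul_log hr v f)),
      integral_affineImage_mul hr v f (fun x => Real.log (f (r⁻¹ • (x - v))) - 2 * Real.log r)]
    simp only [affine_inv_left hr, mul_sub]
    rw [integral_sub hf.entropy (hf.integrable.mul_const _), integral_mul_const, hf.mass, one_mul]
  have h2 : ∫ x, LogHLS.affineImage r v f x * logWeight x = (∫ x, f x * logWeight x)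
      + ∫ y, f y * (logWeight (r • y + v) - logWeight y) := by
    simp only [mul_sub]
    rw [integral_affineImage_mul hr, integral_sub (hf.integrable_weight_affine r v) hf.weight]
    ring
  have h3 : ∫ p : E2 × E2, LogHLS.affineImage r v f p.1 * LogHLS.affineImage r v f p.2
      * Real.log ‖p.1 - p.2‖
      = (∫ p : E2 × E2, f p.1 * f p.2 * Real.log ‖p.1 - p.2‖) + Real.log r := by
    have e : ∫ p : E2 × E2, LogHLS.affineImage r v f p.1 * LogHLS.affineImage r v f p.2
      * Real.log ‖p.1 - p.2‖ = ∫ p : E2 × E2, (fun q : E2 × E2 => (r ^ 4)⁻¹ *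
        (f q.1 * f q.2 * Real.log ‖q.1 - q.2‖ + f q.1 * f q.2 * Real.log r))
        (r⁻¹ • (p - (v, v))) := by
      refine integral_congr_ae ?_
      filter_upwards [ae_fst_ne_snd] with p hp
      exact affineImage_pair_eq hr v f hp
    have e2 : ∫ q : E2 × E2, (f q.1 * f q.2 * Real.log ‖q.1 - q.2‖ + f q.1 * f q.2 * Real.log r)
        = (∫ p : E2 × E2, f p.1 * f p.2 * Real.log ‖p.1 - p.2‖) + Real.log r := by
      rw [integral_add hf.energy (hf.integrable_pair.mul_const _), integral_mul_const,
        hf.integral_pair, one_mul]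
    rw [e, ← e2, Measure.volume_eq_prod]
    refine (integral_comp_affine ((volume : Measure E2).prod (volume : Measure E2))
      (fun q : E2 × E2 => (r ^ 4)⁻¹ * (f q.1 * f q.2 * Real.log ‖q.1 - q.2‖
        + f q.1 * f q.2 * Real.log r)) hr (v, v)).trans ?_
    rw [finrank_E2_prod, integral_const_mul]
    field_simp
  rw [freeEnergy, freeEnergy, h1, h2, h3]
  ring

/-! ### Multiplicative perturbations -/

lemma mul_log_tilt (a : ℝ) {u : ℝ} (hu : 0 < 1 + u) :
    a * (1 + u) * Real.log (a * (1 + u))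
      = a * Real.log a * (1 + u) + a * ((1 + u) * Real.log (1 + u)) := by
  by_cases ha : a = 0
  · simp [ha]
  · rw [Real.log_mul ha hu.ne']; ring

lemma abs_tilt_log_le {u : ℝ} (hu : |u| ≤ 1 / 2) : |(1 + u) * Real.log (1 + u)| ≤ 2 := by
  obtain ⟨h1, h2⟩ := abs_le.1 hu
  have a := Real.log_le_sub_one_of_pos (by linarith : 0 < 1 + u)
  have b := Real.one_sub_inv_le_log_of_pos (by linarith : 0 < 1 + u)
  have c : (1 + u) * (1 - (1 + u)⁻¹) = u := by
    have : 1 + u ≠ 0 := by linarith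
    field_simp; ring
  have d := mul_le_mul_of_nonneg_left b (by linarith : 0 ≤ 1 + u)
  have e := mul_le_mul_of_nonneg_left a (by linarith : 0 ≤ 1 + u)
  rw [c] at d
  rw [abs_le]; constructor <;> nlinarith

lemma Dens.integrable_tilt_log {f : E2 → ℝ} (hf : Dens f) {w : E2 → ℝ} (hw : Measurable w)
    (hw2 : ∀ x, |w x| ≤ 1 / 2) :
    Integrable fun x => f x * ((1 + w x) * Real.log (1 + w x)) :=
  hf.integrable_mul_bdd (c := 2) (by fun_prop) fun x => abs_tilt_log_le (hw2 x)

lemma abs_one_add_le {u : ℝ} (hu : |u| ≤ 1 / 2) : |1 + u| ≤ 2 := by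
  obtain ⟨h1, h2⟩ := abs_le.1 hu
  rw [abs_le]; constructor <;> linarith

lemma Dens.tilt {f : E2 → ℝ} (hf : Dens f) {w : E2 → ℝ} (hw : Measurable w)
    (hw2 : ∀ x, |w x| ≤ 1 / 2) (hw0 : ∫ x, f x * w x = 0) :
    Dens fun x => f x * (1 + w x) where
  measurable := by have := hf.measurable; fun_prop
  nonneg x := mul_nonneg (hf.nonneg x) (by linarith [(abs_le.1 (hw2 x)).1])
  integrable := hf.integrable_mul_bdd (c := 2) (by fun_prop) fun x => abs_one_add_le (hw2 x)
  mass := by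
    simp only [mul_add, mul_one]
    rw [integral_add hf.integrable (hf.integrable_mul_bdd hw hw2), hf.mass, hw0, add_zero]
  entropy := by
    have e : ∀ x, f x * (1 + w x) * Real.log (f x * (1 + w x)) = _ := fun x =>
      mul_log_tilt (f x) (u := w x) (by linarith [(abs_le.1 (hw2 x)).1])
    simp only [e]
    refine Integrable.add ?_ (hf.integrable_tilt_log hw hw2)
    exact hf.entropy.mul_bdd (c := 2)
      (by fun_prop : Measurable fun x => 1 + w x).aestronglyMeasurable
      (Eventually.of_forall fun x => abs_one_add_le (hw2 x))
  weight := by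
    refine (hf.weight.mul_bdd (c := 2) (g := fun x => 1 + w x)
      (by fun_prop : Measurable fun x => 1 + w x).aestronglyMeasurable
      (Eventually.of_forall fun x => abs_one_add_le (hw2 x))).congr
      (Eventually.of_forall fun x => by ring)
  energy := by
    refine (hf.energy.mul_bdd (c := 4) (g := fun p => (1 + w p.1) * (1 + w p.2))
      (by fun_prop : Measurable fun p : E2 × E2 =>
        (1 + w p.1) * (1 + w p.2)).aestronglyMeasurable
      (Eventually.of_forall fun p => ?_)).congr
      (Eventually.of_forall fun p => by ring)
    rw [norm_mul]
    have h1 := abs_one_add_le (hw2 p.1)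
    have h2 := abs_one_add_le (hw2 p.2)
    calc ‖1 + w p.1‖ * ‖1 + w p.2‖ ≤ 2 * 2 :=
          mul_le_mul h1 h2 (norm_nonneg _) (by norm_num)
      _ = 4 := by norm_num

lemma Dens.integrable_mul_energy {f : E2 → ℝ} (hf : Dens f) {w : E2 → ℝ} (hw : Measurable w)
    {c : ℝ} (hw2 : ∀ x, |w x| ≤ c) :
    Integrable fun p : E2 × E2 => f p.1 * f p.2 * Real.log ‖p.1 - p.2‖ * (w p.1 * w p.2) := by
  refine hf.energy.mul_bdd (c := c * c)
    (by fun_prop : Measurable fun p : E2 × E2 => w p.1 * w p.2).aestronglyMeasurable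
    (Eventually.of_forall fun p => ?_)
  rw [norm_mul]
  exact mul_le_mul (hw2 _) (hw2 _) (norm_nonneg _) ((abs_nonneg _).trans (hw2 p.1))

lemma Dens.integrable_mul_kernel {f : E2 → ℝ} (hf : Dens f) {w : E2 → ℝ} (hw : Measurable w)
    {c : ℝ} (hw2 : ∀ x, |w x| ≤ c) :
    Integrable fun p : E2 × E2 => f p.1 * f p.2 * logKernel p.1 p.2 * (w p.1 * w p.2) := by
  refine hf.integrable_kernel.mul_bdd (c := c * c)
    (by fun_prop : Measurable fun p : E2 × E2 => w p.1 * w p.2).aestronglyMeasurable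
    (Eventually.of_forall fun p => ?_)
  rw [norm_mul]
  exact mul_le_mul (hw2 _) (hw2 _) (norm_nonneg _) ((abs_nonneg _).trans (hw2 p.1))

/-- On perturbations of zero mass the planar and the spherical kernels agree. -/
lemma Dens.integral_mul_energy {f : E2 → ℝ} (hf : Dens f) {w : E2 → ℝ} (hw : Measurable w)
    {c : ℝ} (hw2 : ∀ x, |w x| ≤ c) (hw0 : ∫ x, f x * w x = 0) :
    ∫ p : E2 × E2, f p.1 * f p.2 * Real.log ‖p.1 - p.2‖ * (w p.1 * w p.2)
      = - ∫ p : E2 × E2, f p.1 * f p.2 * logKernel p.1 p.2 * (w p.1 * w p.2) := by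
  have hwt : Integrable fun x => f x * logWeight x * w x :=
    hf.weight.mul_bdd (c := c) hw.aestronglyMeasurable (Eventually.of_forall hw2)
  have hfw := hf.integrable_mul_bdd hw hw2
  have j1 : Integrable fun p : E2 × E2 => (f p.1 * logWeight p.1 * w p.1) * (f p.2 * w p.2) := by
    rw [Measure.volume_eq_prod]; exact hwt.mul_prod hfw
  have j2 : Integrable fun p : E2 × E2 => (f p.1 * w p.1) * (f p.2 * logWeight p.2 * w p.2) := by
    rw [Measure.volume_eq_prod]; exact hfw.mul_prod hwt
  have e1 : ∫ p : E2 × E2, (f p.1 * logWeight p.1 * w p.1) * (f p.2 * w p.2) = 0 := by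
    rw [integral_pair_mul (fun x => f x * logWeight x * w x) (fun x => f x * w x), hw0, mul_zero]
  have e2 : ∫ p : E2 × E2, (f p.1 * w p.1) * (f p.2 * logWeight p.2 * w p.2) = 0 := by
    rw [integral_pair_mul (fun x => f x * w x) (fun x => f x * logWeight x * w x), hw0, zero_mul]
  have e : ∀ p : E2 × E2, f p.1 * f p.2 * logKernel p.1 p.2 * (w p.1 * w p.2)
      = ((f p.1 * logWeight p.1 * w p.1) * (f p.2 * w p.2)
        + (f p.1 * w p.1) * (f p.2 * logWeight p.2 * w p.2)) / 2
        - f p.1 * f p.2 * Real.log ‖p.1 - p.2‖ * (w p.1 * w p.2) := by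
    intro p; unfold logKernel; ring
  have j3 : Integrable fun p : E2 × E2 => ((f p.1 * logWeight p.1 * w p.1) * (f p.2 * w p.2)
        + (f p.1 * w p.1) * (f p.2 * logWeight p.2 * w p.2)) / 2 := (j1.add j2).div_const 2
  rw [integral_congr_ae (Eventually.of_forall e),
    integral_sub j3 (hf.integrable_mul_energy hw hw2), integral_div, integral_add j1 j2, e1, e2]
  ring

/-- Second variation of the free energy under multiplicative perturbations. -/
lemma Dens.freeEnergy_tilt_add_le {f : E2 → ℝ} (hf : Dens f) {w : E2 → ℝ} (hw : Measurable w)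
    (hw2 : ∀ x, |w x| ≤ 1 / 2) (hw0 : ∫ x, f x * w x = 0) (lam : ℝ) :
    freeEnergy lam (fun x => f x * (1 + w x)) + freeEnergy lam (fun x => f x * (1 + -w x))
      ≤ 2 * freeEnergy lam f + (∫ x, f x * (w x ^ 2 + w x ^ 4))
        - 4 * lam * ∫ p : E2 × E2, f p.1 * f p.2 * logKernel p.1 p.2 * (w p.1 * w p.2) := by
  have hn : Measurable fun x => -w x := hw.neg
  have hn2 : ∀ x, |-w x| ≤ 1 / 2 := fun x => by rw [abs_neg]; exact hw2 x
  have hn0 : ∫ x, f x * -w x = 0 := by simp only [mul_neg]; rw [integral_neg, hw0, neg_zero]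
  have d1 := hf.tilt hw hw2 hw0
  have d2 := hf.tilt hn hn2 hn0
  have t1 : (∫ x, f x * (1 + w x) * Real.log (f x * (1 + w x)))
      + (∫ x, f x * (1 + -w x) * Real.log (f x * (1 + -w x)))
      ≤ 2 * (∫ x, f x * Real.log (f x)) + ∫ x, f x * (w x ^ 2 + w x ^ 4) := by
    have i1 : Integrable fun x => f x * (w x ^ 2 + w x ^ 4) := by
      refine hf.integrable_mul_bdd (c := 2) (by fun_prop) fun x => ?_
      have h := hw2 x
      rw [abs_of_nonneg (by positivity), ← sq_abs, ← Even.pow_abs (by decide : Even 4)]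
      have h1 : |w x| ^ 2 ≤ 1 := pow_le_one₀ (abs_nonneg _) (by linarith)
      have h2 : |w x| ^ 4 ≤ 1 := pow_le_one₀ (abs_nonneg _) (by linarith)
      linarith
    rw [← integral_add d1.entropy d2.entropy, ← integral_const_mul,
      ← integral_add (hf.entropy.const_mul 2) i1]
    refine integral_mono (d1.entropy.add d2.entropy) ((hf.entropy.const_mul 2).add i1) fun x => ?_
    have hb := abs_le.1 (hw2 x)
    beta_reduce
    rw [mul_log_tilt (f x) (u := w x) (by linarith), mul_log_tilt (f x) (u := -w x) (by linarith)]
    have := mul_le_mul_of_nonneg_left (symm_entropy_le (hw2 x)) (hf.nonneg x)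
    rw [← sub_eq_add_neg]
    linarith
  have t2 : (∫ x, f x * (1 + w x) * logWeight x) + (∫ x, f x * (1 + -w x) * logWeight x)
      = 2 * ∫ x, f x * logWeight x := by
    rw [← integral_add d1.weight d2.weight, ← integral_const_mul]
    exact integral_congr_ae (Eventually.of_forall fun x => by ring)
  have t3 : (∫ p : E2 × E2, f p.1 * (1 + w p.1) * (f p.2 * (1 + w p.2)) * Real.log ‖p.1 - p.2‖)
      + (∫ p : E2 × E2, f p.1 * (1 + -w p.1) * (f p.2 * (1 + -w p.2)) * Real.log ‖p.1 - p.2‖)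
      = 2 * (∫ p : E2 × E2, f p.1 * f p.2 * Real.log ‖p.1 - p.2‖)
        - 2 * ∫ p : E2 × E2, f p.1 * f p.2 * logKernel p.1 p.2 * (w p.1 * w p.2) := by
    have h := hf.integral_mul_energy hw hw2 hw0
    rw [show ∀ a b : ℝ, 2 * a - 2 * b = 2 * a + 2 * -b from fun a b => by ring, ← h,
      ← integral_add d1.energy d2.energy, ← integral_const_mul, ← integral_const_mul,
      ← integral_add (hf.energy.const_mul 2) ((hf.integrable_mul_energy hw hw2).const_mul 2)]
    exact integral_congr_ae (Eventually.of_forall fun p => by ring)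
  unfold freeEnergy
  have t2' := congrArg (fun z => 2 * (1 - lam) * z) t2
  have t3' := congrArg (fun z => 2 * lam * z) t3
  linarith

/-! ### Lower bound in the subcritical regime -/

/-- A negative power, cut off away from the origin. -/
def cutPow (lam t : ℝ) : ℝ := Set.indicator (Set.Iio (1 / 2)) (fun t => t ^ (-2 * lam)) t

lemma integrable_cutPow_norm {lam : ℝ} (h1 : lam < 1) :
    Integrable fun x : E2 => cutPow lam ‖x‖ := by
  rw [integrable_fun_norm_addHaar volume (f := cutPow lam), finrank_E2]
  have h : IntegrableOn (fun t : ℝ => t ^ (1 - 2 * lam)) (Set.Ioo 0 (1 / 2)) :=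
    (intervalIntegral.integrableOn_Ioo_rpow_iff (by norm_num)).2 (by linarith)
  have h2 : IntegrableOn (Set.indicator (Set.Iio (1 / 2)) fun t : ℝ => t ^ (1 - 2 * lam))
      (Set.Ioi 0) := by
    rw [IntegrableOn, integrable_indicator_iff measurableSet_Iio, IntegrableOn,
      Measure.restrict_restrict measurableSet_Iio, Set.inter_comm, Set.Ioi_inter_Iio]
    exact h
  refine h2.congr_fun (fun t ht => ?_) measurableSet_Ioi
  simp only [cutPow, Set.indicator_apply, smul_eq_mul]
  split_ifs
  · rw [sub_eq_add_neg, Real.rpow_add ht, Real.rpow_one]; norm_num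
  · simp

lemma mu2_mul_exp_logKernel {x y : E2} (h : x ≠ y) (lam : ℝ) :
    mu2 x * Real.exp (2 * lam * logKernel x y)
      = π⁻¹ * ((1 + ‖x‖ ^ 2) ^ (lam - 2)
        * (‖x - y‖ / √(1 + ‖y‖ ^ 2)) ^ (-2 * lam)) := by
  have hA := one_add_norm_sq_pos x
  have hB := one_add_norm_sq_pos y
  have hd : 0 < ‖x - y‖ := norm_pos_iff.2 (sub_ne_zero.2 h)
  have hs : 0 < √(1 + ‖y‖ ^ 2) := Real.sqrt_pos.2 hB
  have e1 : mu2 x = π⁻¹ * Real.exp (Real.log (1 + ‖x‖ ^ 2) * -2) := by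
    rw [← Real.rpow_def_of_pos hA, Real.rpow_neg hA.le, mu2]
    norm_num
    ring
  rw [e1, Real.rpow_def_of_pos hA, Real.rpow_def_of_pos (div_pos hd hs),
    Real.log_div hd.ne' hs.ne', Real.log_sqrt hB.le, mul_assoc, ← Real.exp_add, ← Real.exp_add,
    logKernel, logWeight, logWeight]
  ring_nf

lemma mu2_mul_exp_logKernel_le {lam : ℝ} (h0 : 0 ≤ lam) (h1 : lam < 1) {x y : E2} (h : x ≠ y) :
    mu2 x * Real.exp (2 * lam * logKernel x y) ≤ 4 * (1 + ‖x‖ ^ 2) ^ (lam - 2)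
      + 4 * (1 + ‖y‖ ^ 2)⁻¹ * cutPow lam ‖(√(1 + ‖y‖ ^ 2))⁻¹ • (x - y)‖ := by
  have hA := one_add_norm_sq_pos x
  have hB := one_add_norm_sq_pos y
  have hd : 0 < ‖x - y‖ := norm_pos_iff.2 (sub_ne_zero.2 h)
  have hs : 0 < √(1 + ‖y‖ ^ 2) := Real.sqrt_pos.2 hB
  have hu : ‖(√(1 + ‖y‖ ^ 2))⁻¹ • (x - y)‖ = ‖x - y‖ / √(1 + ‖y‖ ^ 2) := by
    rw [norm_smul, Real.norm_eq_abs, abs_of_pos (inv_pos.2 hs)]; ring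
  rw [mu2_mul_exp_logKernel h, hu]
  set u := ‖x - y‖ / √(1 + ‖y‖ ^ 2) with hudef
  have hu0 : 0 < u := div_pos hd hs
  have hpi : π⁻¹ ≤ 1 := inv_le_one_of_one_le₀ (by linarith [Real.pi_gt_three])
  have hp1 : 0 < (1 + ‖x‖ ^ 2) ^ (lam - 2) := Real.rpow_pos_of_pos hA _
  have hp2 : 0 < u ^ (-2 * lam) := Real.rpow_pos_of_pos hu0 _
  have hpm := mul_pos hp1 hp2
  have hle : π⁻¹ * ((1 + ‖x‖ ^ 2) ^ (lam - 2) * u ^ (-2 * lam))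
      ≤ (1 + ‖x‖ ^ 2) ^ (lam - 2) * u ^ (-2 * lam) := by nlinarith
  refine hle.trans ?_
  by_cases hc : u < 1 / 2
  · have e : cutPow lam u = u ^ (-2 * lam) := Set.indicator_of_mem (by exact hc) _
    rw [e]
    have hd2 : ‖x - y‖ ≤ √(1 + ‖y‖ ^ 2) / 2 := by
      rw [hudef, div_lt_iff₀ hs] at hc; linarith
    have hd3 : ‖x - y‖ ^ 2 ≤ (1 + ‖y‖ ^ 2) / 4 := by
      have := pow_le_pow_left₀ hd.le hd2 2
      rw [div_pow, Real.sq_sqrt hB.le] at this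
      linarith
    have hy : ‖y‖ ≤ ‖x‖ + ‖x - y‖ := by
      have := norm_sub_le x (x - y); simpa using this
    have hBA : 1 + ‖y‖ ^ 2 ≤ 4 * (1 + ‖x‖ ^ 2) := by
      have := pow_le_pow_left₀ (norm_nonneg y) hy 2
      nlinarith [sq_nonneg (‖x‖ - ‖x - y‖)]
    have hb : (1 + ‖x‖ ^ 2) ^ (lam - 2) ≤ 4 * (1 + ‖y‖ ^ 2)⁻¹ := by
      have e1 : (1 + ‖x‖ ^ 2) ^ (lam - 2) ≤ (1 + ‖x‖ ^ 2) ^ (-1 : ℝ) :=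
        Real.rpow_le_rpow_of_exponent_le (by nlinarith [sq_nonneg ‖x‖]) (by linarith)
      refine e1.trans ?_
      rw [Real.rpow_neg_one, inv_le_iff_one_le_mul₀ hA, ← div_eq_mul_inv, div_mul_eq_mul_div,
        one_le_div hB]
      exact hBA
    nlinarith [mul_le_mul_of_nonneg_right hb hp2.le]
  · have e : cutPow lam u = 0 := Set.indicator_of_notMem (by exact hc) _
    rw [e, mul_zero, add_zero, mul_comm]
    refine mul_le_mul_of_nonneg_right ?_ hp1.le
    have e1 : u ^ (-2 * lam) ≤ (1 / 2 : ℝ) ^ (-2 * lam) :=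
      Real.rpow_le_rpow_of_nonpos (by norm_num) (not_lt.1 hc) (by linarith)
    have e2 : (1 / 2 : ℝ) ^ (-2 * lam) ≤ (1 / 2 : ℝ) ^ (-2 : ℝ) :=
      Real.rpow_le_rpow_of_exponent_ge (by norm_num) (by norm_num) (by linarith)
    refine (e1.trans e2).trans (le_of_eq ?_)
    rw [Real.rpow_neg (by norm_num)]; norm_num

lemma measurable_logKernel_left (y : E2) : Measurable fun x => logKernel x y := by
  have := continuous_logWeight.measurable
  unfold logKernel
  fun_prop

lemma exists_exp_logKernel_bound {lam : ℝ} (h0 : 0 ≤ lam) (h1 : lam < 1) :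
    ∃ C : ℝ, ∀ y : E2, Integrable (fun x => mu2 x * Real.exp (2 * lam * logKernel x y))
      ∧ ∫ x, mu2 x * Real.exp (2 * lam * logKernel x y) ≤ C := by
  have i1 : Integrable fun x : E2 => 4 * (1 + ‖x‖ ^ 2) ^ (lam - 2) := by
    have := integrable_rpow_neg_one_add_norm_sq (E := E2) (μ := volume) (r := 2 * (2 - lam))
      (by rw [finrank_E2]; push_cast; linarith)
    refine (this.const_mul 4).congr (Eventually.of_forall fun x => ?_)
    simp only
    congr 2; ring
  refine ⟨(∫ x : E2, 4 * (1 + ‖x‖ ^ 2) ^ (lam - 2)) + 4 * ∫ x : E2, cutPow lam ‖x‖, fun y => ?_⟩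
  have hB := one_add_norm_sq_pos y
  have hs : 0 < √(1 + ‖y‖ ^ 2) := Real.sqrt_pos.2 hB
  have i2 : Integrable fun x : E2 =>
      4 * (1 + ‖y‖ ^ 2)⁻¹ * cutPow lam ‖(√(1 + ‖y‖ ^ 2))⁻¹ • (x - y)‖ :=
    (integrable_comp_affine volume (integrable_cutPow_norm h1) hs y).const_mul _
  have hle : ∀ᵐ x : E2, mu2 x * Real.exp (2 * lam * logKernel x y)
      ≤ 4 * (1 + ‖x‖ ^ 2) ^ (lam - 2)
      + 4 * (1 + ‖y‖ ^ 2)⁻¹ * cutPow lam ‖(√(1 + ‖y‖ ^ 2))⁻¹ • (x - y)‖ := by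
    have : ∀ᵐ x : E2, x ≠ y := by
      rw [ae_iff]; simp
    filter_upwards [this] with x hx
    exact mu2_mul_exp_logKernel_le h0 h1 hx
  have i3 : Integrable fun x => mu2 x * Real.exp (2 * lam * logKernel x y) := by
    refine Integrable.mono' (i1.add i2) ?_ ?_
    · have he : Measurable fun x : E2 => Real.exp (2 * lam * logKernel x y) :=
        Real.measurable_exp.comp ((measurable_logKernel_left y).const_mul _)
      exact integrable_mu2.aestronglyMeasurable.mul he.aestronglyMeasurable
    · filter_upwards [hle] with x hx
      rwa [Real.norm_eq_abs, abs_of_nonneg (mul_nonneg (mu2_pos x).le (Real.exp_pos _).le)]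
  refine ⟨i3, (integral_mono_ae i3 (i1.add i2) hle).trans (le_of_eq ?_)⟩
  simp only [Pi.add_apply]
  rw [integral_add i1 i2, integral_const_mul (4 * (1 + ‖y‖ ^ 2)⁻¹),
    integral_comp_affine volume (fun u : E2 => cutPow lam ‖u‖) hs y, finrank_E2,
    Real.sq_sqrt hB.le]
  field_simp

/-- The subcritical free energy is bounded from below. -/
lemma exists_sphEnergy_le {lam : ℝ} (h0 : 0 ≤ lam) (h1 : lam < 1) :
    ∃ C : ℝ, ∀ f : E2 → ℝ, Dens f → 2 * lam * sphEnergy f ≤ relEntropy f + C := by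
  obtain ⟨C, hC⟩ := exists_exp_logKernel_bound h0 h1
  refine ⟨-1 + C, fun f hf => ?_⟩
  have hi := hf.integrable_kernel
  rw [Measure.volume_eq_prod] at hi
  rw [sphEnergy, Measure.volume_eq_prod, integral_prod_symm _ hi, ← integral_const_mul]
  have hm : ∫ y, f y * (relEntropy f + (-1 + C)) = relEntropy f + (-1 + C) := by
    rw [integral_mul_const, hf.mass, one_mul]
  rw [← hm]
  refine integral_mono_ae (hi.integral_prod_right.const_mul _) (hf.integrable.mul_const _) ?_
  filter_upwards [hi.prod_left_ae] with y hy
  by_cases hfy : f y = 0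
  · simp [hfy]
  · have hy2 : Integrable fun x => f x * (2 * lam * logKernel x y) := by
      refine (hy.const_mul (2 * lam * (f y)⁻¹)).congr (Eventually.of_forall fun x => ?_)
      simp only
      field_simp
    have hG := hf.integral_mul_le hy2 (hC y).1
    have e : 2 * lam * ∫ x, f x * f y * logKernel x y
        = f y * ∫ x, f x * (2 * lam * logKernel x y) := by
      rw [← integral_const_mul, ← integral_const_mul]
      exact integral_congr_ae (Eventually.of_forall fun x => by ring)
    rw [e]
    exact mul_le_mul_of_nonneg_left (by linarith [(hC y).2]) (hf.nonneg y)

/-! ### Centering of almost minimisers -/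

lemma logWeight_sub_le (x y : E2) :
    logWeight y - logWeight x ≤ (‖y‖ ^ 2 - ‖x‖ ^ 2) / (1 + ‖x‖ ^ 2) := by
  have hx := one_add_norm_sq_pos x
  have hy := one_add_norm_sq_pos y
  rw [logWeight, logWeight, ← Real.log_div hy.ne' hx.ne']
  refine (Real.log_le_sub_one_of_pos (div_pos hy hx)).trans (le_of_eq ?_)
  field_simp; ring

lemma Dens.integral_le_of_le_stereo {f : E2 → ℝ} (hf : Dens f) (r : ℝ) (v : E2) (i : Fin 3)
    {a b : ℝ} (h : ∀ x, logWeight (r • x + v) - logWeight x ≤ a * stereo i x + b) :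
    ∫ y, f y * (logWeight (r • y + v) - logWeight y) ≤ a * center f i + b := by
  have i1 : Integrable fun y => f y * (logWeight (r • y + v) - logWeight y) := by
    simp only [mul_sub]; exact (hf.integrable_weight_affine r v).sub hf.weight
  have i2 := (hf.integrable_stereo i).const_mul a
  have i3 := hf.integrable.const_mul b
  refine (integral_mono i1 (i2.add i3) fun y => ?_).trans (le_of_eq ?_)
  · have := mul_le_mul_of_nonneg_left (h y) (hf.nonneg y)
    simp only [Pi.add_apply]
    linarith
  · simp only [Pi.add_apply]
    rw [integral_add i2 i3, integral_const_mul, integral_const_mul, hf.mass, center, mul_one]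

lemma logWeight_translate_le (j : Fin 2) (s : ℝ) (x : E2) :
    logWeight ((1 : ℝ) • x + EuclideanSpace.single j s) - logWeight x
      ≤ s * stereo j.castSucc x + s ^ 2 := by
  refine (logWeight_sub_le _ _).trans ?_
  have hx := one_add_norm_sq_pos x
  have e : ‖(1 : ℝ) • x + EuclideanSpace.single j s‖ ^ 2 - ‖x‖ ^ 2 = 2 * s * x j + s ^ 2 := by
    rw [norm_sq_eq, norm_sq_eq]
    fin_cases j <;> simp <;> ring
  have e2 : stereo j.castSucc x = 2 * x j / (1 + ‖x‖ ^ 2) := by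
    fin_cases j <;> simp [stereo]
  rw [e, e2, div_le_iff₀ hx]
  have : (s * (2 * x j / (1 + ‖x‖ ^ 2)) + s ^ 2) * (1 + ‖x‖ ^ 2)
      = 2 * s * x j + s ^ 2 * (1 + ‖x‖ ^ 2) := by field_simp
  rw [this]
  nlinarith [mul_nonneg (sq_nonneg s) (sq_nonneg ‖x‖)]

lemma logWeight_dilate_le {r : ℝ} (x : E2) :
    logWeight (r • x + 0) - logWeight x
      ≤ (r ^ 2 - 1) / 2 * stereo 2 x + (r ^ 2 - 1) / 2 := by
  refine (logWeight_sub_le _ _).trans (le_of_eq ?_)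
  have hx := one_add_norm_sq_pos x
  have e2 : stereo 2 x = (‖x‖ ^ 2 - 1) / (1 + ‖x‖ ^ 2) := by simp [stereo]
  rw [add_zero, norm_smul, mul_pow, Real.norm_eq_abs, sq_abs, e2]
  field_simp; ring

lemma Dens.center_castSucc_le {f : E2 → ℝ} (hf : Dens f) {lam s : ℝ} (h1 : lam < 1)
    (hmin : ∀ g, Dens g → freeEnergy lam f ≤ freeEnergy lam g + (1 - lam) * s ^ 2)
    (j : Fin 2) : -(s * center f j.castSucc) ≤ 3 * s ^ 2 := by
  have h := hmin _ (hf.affineImage one_pos (EuclideanSpace.single j s))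
  rw [hf.freeEnergy_affineImage one_pos, Real.log_one] at h
  have hb := hf.integral_le_of_le_stereo 1 (EuclideanSpace.single j s) j.castSucc
    (logWeight_translate_le j s)
  have h2 : 0 ≤ (1 - lam) * (2 * (∫ y, f y * (logWeight ((1 : ℝ) • y + EuclideanSpace.single j s)
      - logWeight y)) - 2 * 0 + s ^ 2) := by linarith
  have h3 := nonneg_of_mul_nonneg_right h2 (by linarith : 0 < 1 - lam)
  nlinarith [sq_nonneg s]

lemma Dens.center_last_le {f : E2 → ℝ} (hf : Dens f) {lam s : ℝ} (h1 : lam < 1)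
    (hs : |s| ≤ 1 / 2)
    (hmin : ∀ g, Dens g → freeEnergy lam f ≤ freeEnergy lam g + (1 - lam) * s ^ 2) :
    -(s * center f 2) ≤ 3 * s ^ 2 := by
  have hρ : 1 / 2 ≤ 1 + s := by linarith [(abs_le.1 hs).1]
  have hρ0 : 0 < 1 + s := by linarith
  have hr : 0 < √(1 + s) := Real.sqrt_pos.2 hρ0
  have h := hmin _ (hf.affineImage hr 0)
  rw [hf.freeEnergy_affineImage hr, Real.log_sqrt hρ0.le] at h
  have hb := hf.integral_le_of_le_stereo √(1 + s) 0 2 logWeight_dilate_le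
  rw [Real.sq_sqrt hρ0.le] at hb
  have h2 : 0 ≤ (1 - lam) * (2 * (∫ y, f y * (logWeight (√(1 + s) • y + 0)
      - logWeight y)) - 2 * (Real.log (1 + s) / 2) + s ^ 2) := by linarith
  have h3 := nonneg_of_mul_nonneg_right h2 (by linarith : 0 < 1 - lam)
  have h4 : s - 2 * s ^ 2 ≤ Real.log (1 + s) := by
    refine le_trans ?_ (Real.one_sub_inv_le_log_of_pos hρ0)
    have e : 1 - (1 + s)⁻¹ - (s - 2 * s ^ 2) = s ^ 2 * (1 + 2 * s) / (1 + s) := by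
      field_simp; ring
    have : 0 ≤ s ^ 2 * (1 + 2 * s) / (1 + s) :=
      div_nonneg (mul_nonneg (sq_nonneg s) (by linarith)) hρ0.le
    linarith
  nlinarith

lemma Dens.abs_center_le {f : E2 → ℝ} (hf : Dens f) {lam σ : ℝ} (h1 : lam < 1)
    (hσ : 0 < σ) (hσ2 : σ ≤ 1 / 2)
    (hmin : ∀ g, Dens g → freeEnergy lam f ≤ freeEnergy lam g + (1 - lam) * σ ^ 2) (i : Fin 3) :
    |center f i| ≤ 3 * σ := by
  have hmin2 : ∀ g, Dens g → freeEnergy lam f ≤ freeEnergy lam g + (1 - lam) * (-σ) ^ 2 := by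
    simpa using hmin
  have key : -(σ * center f i) ≤ 3 * σ ^ 2 ∧ -(-σ * center f i) ≤ 3 * (-σ) ^ 2 := by
    refine Fin.lastCases ?_ (fun j => ?_) i
    · exact ⟨hf.center_last_le h1 (by rwa [abs_of_pos hσ]) hmin,
        hf.center_last_le h1 (by rwa [abs_neg, abs_of_pos hσ]) hmin2⟩
    · exact ⟨hf.center_castSucc_le h1 hmin j, hf.center_castSucc_le h1 hmin2 j⟩
  rw [abs_le]
  constructor <;> nlinarith [key.1, key.2]

/-! ### Second variation at almost minimisers -/

/-- The perturbation direction given by a centred coordinate function of the sphere. -/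
def dir (f : E2 → ℝ) (τ : ℝ) (i : Fin 3) (x : E2) : ℝ := τ * (stereo i x - center f i)

lemma measurable_dir (f : E2 → ℝ) (τ : ℝ) (i : Fin 3) : Measurable (dir f τ i) :=
  ((continuous_stereo i).measurable.sub_const _).const_mul _

lemma abs_dir_le {f : E2 → ℝ} {τ : ℝ} (hτ : 0 ≤ τ) {i : Fin 3} (hc : |center f i| ≤ 1) (x : E2) :
    |dir f τ i x| ≤ 2 * τ := by
  rw [dir, abs_mul, abs_of_nonneg hτ, mul_comm]
  refine mul_le_mul_of_nonneg_right ((abs_sub _ _).trans ?_) hτ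
  linarith [abs_stereo_le i x]

lemma Dens.integral_dir {f : E2 → ℝ} (hf : Dens f) (τ : ℝ) (i : Fin 3) :
    ∫ x, f x * dir f τ i x = 0 := by
  have e : ∀ x, f x * dir f τ i x = τ * (f x * stereo i x) - τ * center f i * f x := by
    intro x; unfold dir; ring
  rw [integral_congr_ae (Eventually.of_forall e),
    integral_sub ((hf.integrable_stereo i).const_mul _) (hf.integrable.const_mul _),
    integral_const_mul, integral_const_mul, hf.mass, center]
  ring

lemma Dens.integrable_stereo_sq {f : E2 → ℝ} (hf : Dens f) (i : Fin 3) :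
    Integrable fun x => f x * stereo i x ^ 2 := by
  refine hf.integrable_mul_bdd (c := 1) ((continuous_stereo i).measurable.pow_const 2) fun x => ?_
  rw [abs_pow]
  exact pow_le_one₀ (abs_nonneg _) (abs_stereo_le i x)

lemma Dens.integral_dir_sq_le {f : E2 → ℝ} (hf : Dens f) {τ : ℝ} (hτ : 0 ≤ τ) {i : Fin 3}
    (hc : |center f i| ≤ 1) :
    ∫ x, f x * (dir f τ i x ^ 2 + dir f τ i x ^ 4)
      ≤ τ ^ 2 * (∫ x, f x * stereo i x ^ 2) + 16 * τ ^ 4 := by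
  have hm := measurable_dir f τ i
  have b2 : ∀ x, dir f τ i x ^ 2 ≤ 4 * τ ^ 2 := fun x => by
    rw [← sq_abs]
    have := pow_le_pow_left₀ (abs_nonneg _) (abs_dir_le hτ hc x) 2
    linarith
  have b4 : ∀ x, dir f τ i x ^ 4 ≤ 16 * τ ^ 4 := fun x => by
    have := pow_le_pow_left₀ (sq_nonneg _) (b2 x) 2
    linarith
  have i0 : Integrable fun x => f x * (dir f τ i x ^ 2 + dir f τ i x ^ 4) := by
    refine hf.integrable_mul_bdd (c := 4 * τ ^ 2 + 16 * τ ^ 4) (by fun_prop) fun x => ?_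
    rw [abs_of_nonneg (by positivity)]
    linarith [b2 x, b4 x]
  have i1 := (hf.integrable_stereo_sq i).const_mul (τ ^ 2)
  have i2 := (hf.integrable_stereo i).const_mul (2 * τ ^ 2 * center f i)
  have i3 := hf.integrable.const_mul (τ ^ 2 * center f i ^ 2 + 16 * τ ^ 4)
  have hle := integral_mono i0 ((i1.sub i2).add i3) fun x => by
    have := mul_le_mul_of_nonneg_left (b4 x) (hf.nonneg x)
    have e : f x * dir f τ i x ^ 2 = τ ^ 2 * (f x * stereo i x ^ 2)
        - 2 * τ ^ 2 * center f i * (f x * stereo i x) + τ ^ 2 * center f i ^ 2 * f x := by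
      unfold dir; ring
    simp only [Pi.add_apply, Pi.sub_apply]
    linarith
  refine hle.trans ?_
  rw [integral_add' (i1.sub i2) i3, integral_sub' i1 i2, integral_const_mul, integral_const_mul,
    integral_const_mul, hf.mass, ← center]
  nlinarith [mul_nonneg (sq_nonneg τ) (sq_nonneg (center f i))]

lemma Dens.sum_integral_stereo_sq {f : E2 → ℝ} (hf : Dens f) :
    ∑ i, ∫ x, f x * stereo i x ^ 2 = 1 := by
  rw [← integral_finsetSum _ fun i _ => hf.integrable_stereo_sq i, ← hf.mass]
  refine integral_congr_ae (Eventually.of_forall fun x => ?_)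
  simp only
  rw [← Finset.mul_sum, sum_stereo_sq, mul_one]

lemma Dens.integrable_chordSq_kernel {f : E2 → ℝ} (hf : Dens f) :
    Integrable fun p : E2 × E2 => f p.1 * f p.2 * (2 * chordSq p.1 p.2 * logKernel p.1 p.2) := by
  have hm : Measurable fun p : E2 × E2 => 2 * chordSq p.1 p.2 := by
    have := continuous_chordSq.measurable
    fun_prop
  refine (hf.integrable_kernel.mul_bdd (c := 2) hm.aestronglyMeasurable
    (Eventually.of_forall fun p => ?_)).congr (Eventually.of_forall fun p => by ring)
  have h0 := chordSq_nonneg p.1 p.2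
  have h1 := chordSq_le_one p.1 p.2
  rw [Real.norm_eq_abs, abs_of_nonneg (by positivity)]
  linarith

lemma sum_dir_mul_ge {f : E2 → ℝ} {τ δ : ℝ} (hc : ∀ i, |center f i| ≤ δ) (x y : E2) :
    τ ^ 2 * ((1 - 6 * δ) - 2 * chordSq x y) ≤ ∑ i, dir f τ i x * dir f τ i y := by
  have h := sum_stereo_mul x y
  have hb : ∀ i z, center f i * stereo i z ≤ δ := fun i z => by
    refine (le_abs_self _).trans ?_
    rw [abs_mul]
    exact (mul_le_mul (hc i) (abs_stereo_le i z) (abs_nonneg _)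
      ((abs_nonneg _).trans (hc i))).trans_eq (mul_one _)
  have e : ∑ i, dir f τ i x * dir f τ i y = τ ^ 2 * ((∑ i, stereo i x * stereo i y)
      - (∑ i, center f i * stereo i x) - (∑ i, center f i * stereo i y)
      + ∑ i, center f i ^ 2) := by
    simp only [dir, Fin.sum_univ_three]; ring
  rw [e, h]
  refine mul_le_mul_of_nonneg_left ?_ (sq_nonneg τ)
  simp only [Fin.sum_univ_three]
  have := hb 0 x; have := hb 1 x; have := hb 2 x
  have := hb 0 y; have := hb 1 y; have := hb 2 y
  nlinarith [sq_nonneg (center f 0), sq_nonneg (center f 1), sq_nonneg (center f 2)]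

lemma Dens.sum_energy_dir_ge {f : E2 → ℝ} (hf : Dens f) {τ δ : ℝ} (hτ : 0 ≤ τ) (hδ : δ ≤ 1)
    (hc : ∀ i, |center f i| ≤ δ) :
    τ ^ 2 * ((1 - 6 * δ) * sphEnergy f - 1 / 4 - 3 * δ ^ 2 / 2)
      ≤ ∑ i, ∫ p : E2 × E2, f p.1 * f p.2 * logKernel p.1 p.2
        * (dir f τ i p.1 * dir f τ i p.2) := by
  have hi : ∀ i, Integrable fun p : E2 × E2 => f p.1 * f p.2 * logKernel p.1 p.2
        * (dir f τ i p.1 * dir f τ i p.2) := fun i =>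
    hf.integrable_mul_kernel (measurable_dir f τ i) (abs_dir_le hτ ((hc i).trans hδ))
  have hck := hf.integrable_chordSq_kernel
  have hk := hf.chordSq_mul_kernel_le hck
  have hsum : ∑ i, center f i ^ 2 ≤ 3 * δ ^ 2 := by
    have : ∀ i, center f i ^ 2 ≤ δ ^ 2 := fun i => by
      rw [← sq_abs]; exact pow_le_pow_left₀ (abs_nonneg _) (hc i) 2
    rw [Fin.sum_univ_three]
    linarith [this 0, this 1, this 2]
  have j1 := hf.integrable_kernel.const_mul (1 - 6 * δ)
  have hle : ∫ p : E2 × E2, τ ^ 2 * ((1 - 6 * δ) * (f p.1 * f p.2 * logKernel p.1 p.2)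
      - f p.1 * f p.2 * (2 * chordSq p.1 p.2 * logKernel p.1 p.2))
      ≤ ∑ i, ∫ p : E2 × E2, f p.1 * f p.2 * logKernel p.1 p.2
        * (dir f τ i p.1 * dir f τ i p.2) := by
    rw [← integral_finsetSum _ fun i _ => hi i]
    refine integral_mono_ae ((j1.sub hck).const_mul _)
      (integrable_finsetSum _ fun i _ => hi i) ?_
    filter_upwards [ae_fst_ne_snd] with p hp
    rw [← Finset.mul_sum]
    have h := mul_le_mul_of_nonneg_left (sum_dir_mul_ge (τ := τ) hc p.1 p.2)
      (mul_nonneg (mul_nonneg (hf.nonneg p.1) (hf.nonneg p.2)) (logKernel_nonneg hp))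
    refine le_trans (le_of_eq ?_) h
    ring
  refine le_trans ?_ hle
  rw [integral_const_mul, integral_sub j1 hck, integral_const_mul]
  refine mul_le_mul_of_nonneg_left ?_ (sq_nonneg τ)
  unfold sphEnergy
  linarith

lemma Dens.sphEnergy_le_of_almost_min {f : E2 → ℝ} (hf : Dens f) {lam τ : ℝ} (h0 : 0 ≤ lam)
    (h1 : lam < 1) (hτ : 0 < τ) (hτ2 : τ ≤ 1 / 4)
    (hmin : ∀ g, Dens g → freeEnergy lam f ≤ freeEnergy lam g + (1 - lam) * (τ ^ 2) ^ 2) :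
    4 * lam * ((1 - 18 * τ ^ 2) * sphEnergy f - 1 / 4 - 27 * τ ^ 4 / 2) ≤ 1 + 54 * τ ^ 2 := by
  have hσ2 : τ ^ 2 ≤ 1 / 16 := by nlinarith
  have hc : ∀ i, |center f i| ≤ 3 * τ ^ 2 :=
    hf.abs_center_le h1 (by positivity) (by linarith) hmin
  have hc1 : ∀ i, |center f i| ≤ 1 := fun i => (hc i).trans (by linarith)
  have hv : ∀ i, 4 * lam * (∫ p : E2 × E2, f p.1 * f p.2 * logKernel p.1 p.2
        * (dir f τ i p.1 * dir f τ i p.2))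
      ≤ τ ^ 2 * (∫ x, f x * stereo i x ^ 2) + 16 * τ ^ 4 + 2 * ((1 - lam) * (τ ^ 2) ^ 2) := by
    intro i
    have hm := measurable_dir f τ i
    have hb : ∀ x, |dir f τ i x| ≤ 1 / 2 := fun x =>
      (abs_dir_le hτ.le (hc1 i) x).trans (by linarith)
    have hz := hf.integral_dir τ i
    have hn : ∫ x, f x * -dir f τ i x = 0 := by
      simp only [mul_neg]; rw [integral_neg, hz, neg_zero]
    have v1 := hmin _ (hf.tilt hm hb hz)
    have v2 := hmin _ (hf.tilt hm.neg (fun x => by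
      rw [Pi.neg_apply, abs_neg]; exact hb x) hn)
    simp only [Pi.neg_apply] at v2
    have v3 := hf.freeEnergy_tilt_add_le hm hb hz lam
    have v4 := hf.integral_dir_sq_le hτ.le (hc1 i)
    linarith
  have hs := hf.sum_energy_dir_ge hτ.le (by linarith) hc
  have hq := hf.sum_integral_stereo_sq
  rw [Fin.sum_univ_three] at hs hq
  have hs2 := mul_le_mul_of_nonneg_left hs (by linarith : 0 ≤ 4 * lam)
  have hq2 := congrArg (fun z => τ ^ 2 * z) hq
  simp only [mul_add] at hq2
  have hfin : τ ^ 2 * (4 * lam * ((1 - 18 * τ ^ 2) * sphEnergy f - 1 / 4 - 27 * τ ^ 4 / 2))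
      ≤ τ ^ 2 * (1 + 54 * τ ^ 2) := by
    have a := hv 0
    have b := hv 1
    have c := hv 2
    have d : (1 - lam) * (τ ^ 2) ^ 2 ≤ τ ^ 4 := by
      nlinarith [mul_nonneg h0 (sq_nonneg (τ ^ 2))]
    have e : 4 * lam * (τ ^ 2 * ((1 - 6 * (3 * τ ^ 2)) * sphEnergy f - 1 / 4
        - 3 * (3 * τ ^ 2) ^ 2 / 2)) = τ ^ 2 * (4 * lam * ((1 - 18 * τ ^ 2) * sphEnergy f - 1 / 4
        - 27 * τ ^ 4 / 2)) := by ring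
    linarith
  exact le_of_mul_le_mul_left hfin (by positivity)

/-! ### The logarithmic Hardy–Littlewood–Sobolev inequality for densities -/

lemma Dens.exists_almost_min {g : E2 → ℝ} (hg : Dens g) {lam ε : ℝ} (h0 : 0 ≤ lam)
    (h1 : lam < 1) (hε : 0 < ε) :
    ∃ f, Dens f ∧ ∀ g, Dens g → freeEnergy lam f ≤ freeEnergy lam g + ε := by
  obtain ⟨C, hC⟩ := exists_sphEnergy_le h0 h1
  let S : Set ℝ := freeEnergy lam '' {f | Dens f}
  have hS : S.Nonempty := ⟨_, g, hg, rfl⟩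
  have hb : BddBelow S := by
    refine ⟨-C - Real.log π, ?_⟩
    rintro _ ⟨f, hf, rfl⟩
    linarith [hC f hf, Dens.freeEnergy_eq hf lam]
  obtain ⟨_, ⟨f, hf, rfl⟩, hlt⟩ := exists_lt_of_csInf_lt hS (lt_add_of_pos_right (sInf S) hε)
  exact ⟨f, hf, fun g hg => by linarith [csInf_le hb ⟨g, hg, rfl⟩]⟩

lemma Dens.freeEnergy_ge {g : E2 → ℝ} (hg : Dens g) {lam : ℝ} (h0 : 0 ≤ lam) (h1 : lam < 1) :
    -(1 + lam) / 2 ≤ freeEnergy lam g + Real.log π := by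
  set Y := freeEnergy lam g + Real.log π with hY
  have key : ∀ τ : ℝ, 0 < τ → τ ≤ 1 / 5 → -(Y + (1 - lam) * (τ ^ 2) ^ 2) * (1 - 18 * τ ^ 2)
      ≤ (1 + lam) / 2 + 27 * τ ^ 2 + 27 * τ ^ 4 := by
    intro τ hτ hτ2
    obtain ⟨f, hf, hmin⟩ := hg.exists_almost_min h0 h1
      (mul_pos (by linarith : 0 < 1 - lam) (by positivity : 0 < (τ ^ 2) ^ 2))
    have h := hf.sphEnergy_le_of_almost_min h0 h1 hτ (by linarith) hmin
    have e := hf.freeEnergy_eq lam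
    have r := hf.relEntropy_nonneg
    have m := hmin g hg
    have hx : -(Y + (1 - lam) * (τ ^ 2) ^ 2) ≤ 2 * lam * sphEnergy f := by linarith
    have hp : 0 ≤ 1 - 18 * τ ^ 2 := by nlinarith
    refine (mul_le_mul_of_nonneg_right hx hp).trans ?_
    have : lam * τ ^ 4 ≤ τ ^ 4 := mul_le_of_le_one_left (by positivity) h1.le
    linarith
  have t1 : Tendsto (fun τ : ℝ => -(Y + (1 - lam) * (τ ^ 2) ^ 2) * (1 - 18 * τ ^ 2))
      (nhdsWithin 0 (Set.Ioi 0)) (nhds (-Y)) := by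
    have : Continuous fun τ : ℝ => -(Y + (1 - lam) * (τ ^ 2) ^ 2) * (1 - 18 * τ ^ 2) := by fun_prop
    have h := this.tendsto 0
    simp only [ne_eq, OfNat.ofNat_ne_zero, not_false_eq_true, zero_pow, mul_zero, add_zero,
      sub_zero, mul_one] at h
    exact h.mono_left nhdsWithin_le_nhds
  have t2 : Tendsto (fun τ : ℝ => (1 + lam) / 2 + 27 * τ ^ 2 + 27 * τ ^ 4)
      (nhdsWithin 0 (Set.Ioi 0)) (nhds ((1 + lam) / 2)) := by
    have : Continuous fun τ : ℝ => (1 + lam) / 2 + 27 * τ ^ 2 + 27 * τ ^ 4 := by fun_prop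
    have h := this.tendsto 0
    simp only [ne_eq, OfNat.ofNat_ne_zero, not_false_eq_true, zero_pow, mul_zero, add_zero] at h
    exact h.mono_left nhdsWithin_le_nhds
  have := le_of_tendsto_of_tendsto t1 t2 (by
    filter_upwards [Ioc_mem_nhdsGT (by norm_num : (0 : ℝ) < 1 / 5)] with τ hτ
    exact key τ hτ.1 hτ.2)
  linarith

/-- The logarithmic Hardy–Littlewood–Sobolev inequality for probability densities. -/
lemma Dens.log_hls {f : E2 → ℝ} (hf : Dens f) : 2 * sphEnergy f - 1 ≤ relEntropy f := by
  have t : Tendsto (fun lam : ℝ => relEntropy f - 2 * lam * sphEnergy f + (1 + lam) / 2)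
      (nhdsWithin 1 (Set.Iio 1)) (nhds (relEntropy f - 2 * 1 * sphEnergy f + (1 + 1) / 2)) := by
    have : Continuous fun lam : ℝ => relEntropy f - 2 * lam * sphEnergy f + (1 + lam) / 2 := by
      fun_prop
    exact (this.tendsto 1).mono_left nhdsWithin_le_nhds
  have := ge_of_tendsto t (b := 0) (by
    filter_upwards [Ico_mem_nhdsLT (by norm_num : (0 : ℝ) < 1)] with lam hl
    have h := hf.freeEnergy_ge hl.1 hl.2
    rw [hf.freeEnergy_eq] at h
    linarith)
  linarith

/-! ### From densities to admissible functions -/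

lemma normalized_mul_log {M : ℝ} (hM : 0 < M) (a : ℝ) :
    |a| / M * Real.log (|a| / M) = M⁻¹ * (|a| * Real.log a) - M⁻¹ * Real.log M * |a| := by
  by_cases h : a = 0
  · simp [h]
  · rw [Real.log_div (abs_ne_zero.2 h) hM.ne', Real.log_abs]; ring

lemma dens_of_admissible {f : E2 → ℝ} (hf : Admissible f) {M : ℝ} (hM : M = ∫ x, f x)
    (hM0 : 0 < M) : Dens fun x => |f x| / M := by
  obtain ⟨hm, hn, hi, he, hV, hE⟩ := hf
  have habs : ∀ᵐ x, |f x| = f x := hn.mono fun x hx => abs_of_nonneg hx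
  have hent : Integrable fun x => |f x| * Real.log (f x) :=
    he.mono (by fun_prop : Measurable fun x => |f x| * Real.log (f x)).aestronglyMeasurable
      (Eventually.of_forall fun x => by simp)
  refine ⟨by fun_prop, fun x => by positivity, hi.abs.div_const M, ?_, ?_, ?_, ?_⟩
  · rw [integral_div, integral_congr_ae habs, ← hM, div_self hM0.ne']
  · simp only [normalized_mul_log hM0]
    exact (hent.const_mul _).sub (hi.abs.const_mul _)
  · refine (((hV.sub (hi.const_mul (Real.log π))).div_const 2).div_const M).congr ?_
    filter_upwards [habs] with x hx
    simp only [Pi.sub_apply, Vpot, hx, logWeight]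
    ring
  · have h : Integrable fun p : E2 × E2 => |f p.1| * |f p.2| * Real.log ‖p.1 - p.2‖ :=
      hE.mono (by fun_prop : Measurable fun p : E2 × E2 =>
        |f p.1| * |f p.2| * Real.log ‖p.1 - p.2‖).aestronglyMeasurable
        (Eventually.of_forall fun p => by simp)
    exact (h.div_const (M ^ 2)).congr (Eventually.of_forall fun p => by field_simp)

lemma Dens.relEntropy_add_nonneg {f : E2 → ℝ} (hf : Dens f) {α : ℝ} (hα : 0 ≤ α) :
    0 ≤ relEntropy f + (α - 1) * (2 * sphEnergy f - 1) := by
  have h1 := hf.half_le_sphEnergy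
  have h2 := hf.log_hls
  nlinarith [mul_nonneg hα (by linarith : 0 ≤ 2 * sphEnergy f - 1)]

end LogHLS

open LogHLS

/-- Generalized logarithmic Hardy–Littlewood–Sobolev inequality. -/
theorem generalized_log_HLS (α : ℝ) (hα : 0 ≤ α) (f : E2 → ℝ) (hf : Admissible f)
    (M : ℝ) (hM : M = ∫ x, f x) (hM0 : 0 < M) :
    (∫ x, f x * Real.log (f x / M)) + α * (∫ x, Vpot x * f x)
        + M * (1 - α) * (1 + Real.log π)
      ≥ (2 / M) * (α - 1) * ∫ p : E2 × E2, f p.1 * f p.2 * Real.log ‖p.1 - p.2‖ := by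
  have hg := dens_of_admissible hf hM hM0
  set g : E2 → ℝ := fun x => |f x| / M with hgdef
  have hfg : ∀ᵐ x, f x = M * g x := hf.2.1.mono fun x hx => by
    simp only [hgdef, abs_of_nonneg hx]; field_simp
  have e1 : ∫ x, f x * Real.log (f x / M) = M * ∫ x, g x * Real.log (g x) := by
    rw [← integral_const_mul]
    refine integral_congr_ae ?_
    filter_upwards [hfg] with x hx
    rw [hx, mul_div_cancel_left₀ _ hM0.ne', mul_assoc]
  have e2 : ∫ x, Vpot x * f x = M * (2 * (∫ x, g x * logWeight x) + Real.log π) := by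
    have h : ∫ x, (2 * (g x * logWeight x) + Real.log π * g x)
        = 2 * (∫ x, g x * logWeight x) + Real.log π := by
      rw [integral_add (hg.weight.const_mul 2) (hg.integrable.const_mul _), integral_const_mul,
        integral_const_mul, hg.mass, mul_one]
    rw [← h, ← integral_const_mul]
    refine integral_congr_ae ?_
    filter_upwards [hfg] with x hx
    rw [hx, Vpot, logWeight]; ring
  have e3 : ∫ p : E2 × E2, f p.1 * f p.2 * Real.log ‖p.1 - p.2‖
      = M ^ 2 * ∫ p : E2 × E2, g p.1 * g p.2 * Real.log ‖p.1 - p.2‖ := by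
    rw [← integral_const_mul]
    refine integral_congr_ae ?_
    rw [Measure.volume_eq_prod]
    filter_upwards [Measure.quasiMeasurePreserving_fst.ae hfg,
      Measure.quasiMeasurePreserving_snd.ae hfg] with p h1 h2
    rw [h1, h2]; ring
  have key := mul_nonneg hM0.le (hg.relEntropy_add_nonneg hα)
  rw [hg.sphEnergy_eq, relEntropy] at key
  rw [e1, e2, e3]
  have e4 : 2 / M * (α - 1) * (M ^ 2 * ∫ p : E2 × E2, g p.1 * g p.2 * Real.log ‖p.1 - p.2‖)
      = 2 * M * (α - 1) * ∫ p : E2 × E2, g p.1 * g p.2 * Real.log ‖p.1 - p.2‖ := by field_simp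
  rw [e4]
  linarith
end
end

section
/- For every α ≥ 0 and every M > 0, the function f_⋆ = M μ realizes the equality case in the generalized logarithmic Hardy–Littlewood–Sobolev inequality: ∫_{ℝ²} f_⋆ log(f_⋆/M) dx + α ∫_{ℝ²} V f_⋆ dx + M(1−α)(1+log π) = (2/M)(α−1) ∬_{ℝ²×ℝ²} f_⋆(x) f_⋆(y) log|x−y| dx dy. -/
open MeasureTheory Real Filter

noncomputable section

open Set Topology

lemma hasDerivAt_one_add_sq_inv (r : ℝ) :
    HasDerivAt (fun r : ℝ => (1 + r ^ 2)⁻¹) (-(2 * r) / (1 + r ^ 2) ^ 2) r := by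
  have h : HasDerivAt (fun r : ℝ => 1 + r ^ 2) (2 * r) r := by
    simpa using (hasDerivAt_pow 2 r).const_add 1
  exact h.inv (by positivity)

lemma hasDerivAt_log_one_add_sq (r : ℝ) :
    HasDerivAt (fun r : ℝ => Real.log (1 + r ^ 2)) (2 * r / (1 + r ^ 2)) r := by
  have h : HasDerivAt (fun r : ℝ => 1 + r ^ 2) (2 * r) r := by
    simpa using (hasDerivAt_pow 2 r).const_add 1
  exact h.log (by positivity)

lemma tendsto_one_add_sq_atTop : Tendsto (fun r : ℝ => 1 + r ^ 2) atTop atTop :=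
  tendsto_atTop_add_const_left _ _ (tendsto_pow_atTop two_ne_zero)

lemma tendsto_one_add_sq_inv : Tendsto (fun r : ℝ => (1 + r ^ 2)⁻¹) atTop (𝓝 0) :=
  tendsto_inv_atTop_zero.comp tendsto_one_add_sq_atTop

lemma tendsto_log_one_add_sq_mul_inv :
    Tendsto (fun r : ℝ => Real.log (1 + r ^ 2) * (1 + r ^ 2)⁻¹) atTop (𝓝 0) :=
  (Real.isLittleO_log_id_atTop.tendsto_div_nhds_zero).comp tendsto_one_add_sq_atTop

lemma tendsto_half_log_one_add_sq_sub_log :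
    Tendsto (fun r : ℝ => 1 / 2 * Real.log (1 + r ^ 2) - Real.log r) atTop (𝓝 0) := by
  have h1 : Tendsto (fun r : ℝ => 1 / 2 * Real.log (1 + (r ^ 2)⁻¹)) atTop (𝓝 0) := by
    have h2 : Tendsto (fun r : ℝ => 1 + (r ^ 2)⁻¹) atTop (𝓝 (1 + 0)) :=
      (tendsto_inv_atTop_zero.comp (tendsto_pow_atTop two_ne_zero)).const_add 1
    have h4 := (h2.log (by norm_num)).const_mul (1 / 2)
    rwa [add_zero, Real.log_one, mul_zero] at h4
  refine h1.congr' ?_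
  filter_upwards [eventually_gt_atTop 0] with r hr
  have h3 : 1 + (r ^ 2)⁻¹ = (1 + r ^ 2) / r ^ 2 := by field_simp; ring
  rw [h3, Real.log_div (by positivity) (by positivity), Real.log_pow]
  push_cast
  ring

/-- The mass of `μ` in polar coordinates. -/
lemma integrableOn_and_integral_radial_mass :
    IntegrableOn (fun r : ℝ => 2 * r / (1 + r ^ 2) ^ 2) (Ioi 0) ∧
      ∫ r in Ioi (0 : ℝ), 2 * r / (1 + r ^ 2) ^ 2 = 1 := by
  have hd : ∀ r ∈ Ici (0 : ℝ),
      HasDerivAt (fun r : ℝ => -(1 + r ^ 2)⁻¹) (2 * r / (1 + r ^ 2) ^ 2) r := fun r _ =>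
    (hasDerivAt_one_add_sq_inv r).neg.congr_deriv (by ring)
  have hp : ∀ r ∈ Ioi (0 : ℝ), 0 ≤ 2 * r / (1 + r ^ 2) ^ 2 := fun r hr => by
    have : 0 < r := hr
    positivity
  have hl : Tendsto (fun r : ℝ => -(1 + r ^ 2)⁻¹) atTop (𝓝 0) := by
    simpa using tendsto_one_add_sq_inv.neg
  refine ⟨integrableOn_Ioi_deriv_of_nonneg' hd hp hl, ?_⟩
  rw [integral_Ioi_of_hasDerivAt_of_nonneg' hd hp hl]
  norm_num

lemma log_one_add_sq_nonneg (r : ℝ) : 0 ≤ Real.log (1 + r ^ 2) :=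
  Real.log_nonneg (by nlinarith [sq_nonneg r])

lemma hasDerivAt_radial_log (r : ℝ) :
    HasDerivAt (fun r : ℝ => -(Real.log (1 + r ^ 2) * (1 + r ^ 2)⁻¹ + (1 + r ^ 2)⁻¹))
      (2 * r / (1 + r ^ 2) ^ 2 * Real.log (1 + r ^ 2)) r := by
  refine (((hasDerivAt_log_one_add_sq r).mul (hasDerivAt_one_add_sq_inv r)).add
    (hasDerivAt_one_add_sq_inv r)).neg.congr_deriv ?_
  field_simp
  ring

/-- The logarithmic moment of `μ` in polar coordinates. -/
lemma integrableOn_and_integral_radial_log :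
    IntegrableOn (fun r : ℝ => 2 * r / (1 + r ^ 2) ^ 2 * Real.log (1 + r ^ 2)) (Ioi 0) ∧
      ∫ r in Ioi (0 : ℝ), 2 * r / (1 + r ^ 2) ^ 2 * Real.log (1 + r ^ 2) = 1 := by
  have hd := fun r (_ : r ∈ Ici (0 : ℝ)) => hasDerivAt_radial_log r
  have hp : ∀ r ∈ Ioi (0 : ℝ), 0 ≤ 2 * r / (1 + r ^ 2) ^ 2 * Real.log (1 + r ^ 2) := fun r hr => by
    have : 0 < r := hr
    have := log_one_add_sq_nonneg r
    positivity
  have hl : Tendsto (fun r : ℝ => -(Real.log (1 + r ^ 2) * (1 + r ^ 2)⁻¹ + (1 + r ^ 2)⁻¹))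
      atTop (𝓝 0) := by
    simpa using (tendsto_log_one_add_sq_mul_inv.add tendsto_one_add_sq_inv).neg
  refine ⟨integrableOn_Ioi_deriv_of_nonneg' hd hp hl, ?_⟩
  rw [integral_Ioi_of_hasDerivAt_of_nonneg' hd hp hl]
  norm_num

lemma measureReal_ball_E2 : (volume : Measure E2).real (Metric.ball 0 1) = π := by
  simp [Measure.real, Real.pi_pos.le]

lemma integrable_mu2_mul_radial {g : ℝ → ℝ}
    (hg : IntegrableOn (fun r : ℝ => 2 * r / (1 + r ^ 2) ^ 2 * g r) (Ioi 0)) :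
    Integrable (fun x : E2 => mu2 x * g ‖x‖) := by
  refine (integrable_fun_norm_addHaar (E := E2) (μ := volume)
    (f := fun r => 1 / (π * (1 + r ^ 2) ^ 2) * g r)).2 ?_
  refine IntegrableOn.congr_fun (hg.const_mul (1 / (2 * π))) (fun r _ => ?_) measurableSet_Ioi
  simp only [finrank_euclideanSpace, Fintype.card_fin, smul_eq_mul]
  field_simp
  ring

lemma integral_mu2_mul_radial (g : ℝ → ℝ) :
    ∫ x : E2, mu2 x * g ‖x‖ = ∫ r in Ioi (0 : ℝ), 2 * r / (1 + r ^ 2) ^ 2 * g r := by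
  have h := integral_fun_norm_addHaar (E := E2) (μ := volume)
    (fun r => 1 / (π * (1 + r ^ 2) ^ 2) * g r)
  refine h.trans ?_
  rw [measureReal_ball_E2, finrank_euclideanSpace, Fintype.card_fin, nsmul_eq_mul, smul_eq_mul,
    ← mul_assoc, ← integral_const_mul]
  refine integral_congr_ae (Eventually.of_forall fun r => ?_)
  simp only [smul_eq_mul]
  push_cast
  field_simp

lemma integrable_mu2 : Integrable mu2 := by
  simpa using integrable_mu2_mul_radial (g := fun _ => 1)
    (by simpa using integrableOn_and_integral_radial_mass.1)

lemma integral_mu2 : ∫ x, mu2 x = 1 := by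
  simpa [integrableOn_and_integral_radial_mass.2] using integral_mu2_mul_radial (fun _ => 1)

lemma integrable_mu2_mul_log :
    Integrable (fun x : E2 => mu2 x * Real.log (1 + ‖x‖ ^ 2)) :=
  integrable_mu2_mul_radial (g := fun r => Real.log (1 + r ^ 2))
    integrableOn_and_integral_radial_log.1

lemma integral_mu2_mul_log : ∫ x : E2, mu2 x * Real.log (1 + ‖x‖ ^ 2) = 1 :=
  (integral_mu2_mul_radial fun r => Real.log (1 + r ^ 2)).trans
    integrableOn_and_integral_radial_log.2

lemma mu2_nonneg (x : E2) : 0 ≤ mu2 x := by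
  unfold mu2
  positivity

lemma integral_Vpot_mul_mu2 : ∫ x, Vpot x * mu2 x = 2 + Real.log π := by
  have h : (fun x => Vpot x * mu2 x)
      = fun x => 2 * (mu2 x * Real.log (1 + ‖x‖ ^ 2)) + Real.log π * mu2 x := by
    ext x
    unfold Vpot
    ring
  rw [h, integral_add (integrable_mu2_mul_log.const_mul 2) (integrable_mu2.const_mul _),
    integral_const_mul, integral_const_mul, integral_mu2_mul_log, integral_mu2]
  ring

lemma log_mu2 (x : E2) : Real.log (mu2 x) = -Vpot x := by
  unfold mu2 Vpot
  rw [one_div, Real.log_inv, Real.log_mul (by positivity) (by positivity), Real.log_pow]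
  push_cast
  ring

lemma half_log_one_add_sq_add_sub_log_nonneg {a b d : ℝ} (ha : 0 ≤ a) (hb : 0 ≤ b) (hd : 0 ≤ d)
    (h : d ≤ a + b) :
    0 ≤ 1 / 2 * Real.log (1 + a ^ 2) + 1 / 2 * Real.log (1 + b ^ 2) - Real.log d := by
  rcases hd.eq_or_lt with rfl | hd
  · have := log_one_add_sq_nonneg a
    have := log_one_add_sq_nonneg b
    simp only [Real.log_zero]
    linarith
  have h1 : d ^ 2 ≤ (1 + a ^ 2) * (1 + b ^ 2) := by
    nlinarith [sq_nonneg (1 - a * b), mul_nonneg ha hb]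
  have h2 := Real.log_le_log (by positivity) h1
  rw [Real.log_mul (by positivity) (by positivity), Real.log_pow] at h2
  push_cast at h2
  linarith

/-- The mean over the circle of radius `r` of `log ‖· - x‖` is `log (max r ‖x‖)`. -/
lemma integral_log_norm_circleMap_sub {r : ℝ} (hr : 0 < r) (x : ℂ) :
    ∫ θ in (-π)..π, Real.log ‖circleMap 0 r θ - x‖ = 2 * π * Real.log (max r ‖x‖) := by
  have hper : Function.Periodic (fun θ => Real.log ‖circleMap 0 r θ - x‖) (2 * π) :=
    fun θ => by simp [periodic_circleMap 0 r θ]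
  have h1 := hper.intervalIntegral_add_eq (-π) 0
  have h2 := circleAverage_log_norm_sub_const_eq_log_radius_add_posLog (c := 0) (a := x) hr.ne'
  rw [circleAverage_def, smul_eq_mul] at h2
  rw [show -π + 2 * π = π by ring, zero_add] at h1
  have h3 : Real.log r + Real.posLog (r⁻¹ * ‖0 - x‖) = Real.log (max r ‖x‖) := by
    rw [zero_sub, norm_neg]
    rcases le_total r ‖x‖ with h | h
    · rw [max_eq_right h, Real.posLog_eq_log, Real.log_mul (by positivity)
        (hr.trans_le h).ne', Real.log_inv]
      · ring
      · rw [abs_of_nonneg (by positivity), inv_mul_eq_div, one_le_div hr]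
        exact h
    · rw [max_eq_left h, (Real.posLog_eq_zero_iff _).2, add_zero]
      rw [abs_of_nonneg (by positivity), inv_mul_eq_div, div_le_one hr]
      exact h
  rw [h1, ← h3, ← h2]
  field_simp

lemma lintegral_angular {r : ℝ} (hr : 0 < r) (x : ℂ) :
    ∫⁻ θ in Ioo (-π) π, ENNReal.ofReal (1 / 2 * Real.log (1 + ‖x‖ ^ 2)
        + 1 / 2 * Real.log (1 + r ^ 2) - Real.log ‖circleMap 0 r θ - x‖)
      = ENNReal.ofReal (2 * π * (1 / 2 * Real.log (1 + ‖x‖ ^ 2)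
        + 1 / 2 * Real.log (1 + r ^ 2) - Real.log (max r ‖x‖))) := by
  have hpi : -π ≤ π := by linarith [Real.pi_pos]
  have hper : Function.Periodic (fun θ => Real.log ‖circleMap 0 r θ - x‖) (2 * π) :=
    fun θ => by simp [periodic_circleMap 0 r θ]
  have hint : IntervalIntegrable (fun θ => Real.log ‖circleMap 0 r θ - x‖) volume (-π) π :=
    hper.intervalIntegrable₀ Real.two_pi_pos.ne'
      (circleIntegrable_log_norm_sub_const (c := 0) (a := x) r) _ _
  have hint' : IntervalIntegrable (fun θ => 1 / 2 * Real.log (1 + ‖x‖ ^ 2)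
      + 1 / 2 * Real.log (1 + r ^ 2) - Real.log ‖circleMap 0 r θ - x‖) volume (-π) π :=
    intervalIntegrable_const.sub hint
  rw [← ofReal_integral_eq_lintegral_ofReal
    ((intervalIntegrable_iff_integrableOn_Ioo_of_le hpi).1 hint')
    (Eventually.of_forall fun θ => ?_)]
  · rw [← integral_Ioc_eq_integral_Ioo, ← intervalIntegral.integral_of_le hpi,
      intervalIntegral.integral_sub intervalIntegrable_const hint,
      integral_log_norm_circleMap_sub hr, intervalIntegral.integral_const, smul_eq_mul]
    congr 1
    ring
  · refine half_log_one_add_sq_add_sub_log_nonneg (norm_nonneg _) hr.le (norm_nonneg _)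
      ((norm_sub_le _ _).trans ?_)
    rw [norm_circleMap_zero, abs_of_pos hr, add_comm]

/-- The nonnegative energy density in polar coordinates has integral `1 / 2`. -/
lemma lintegral_radial_energy {a : ℝ} (ha : 0 ≤ a) :
    ∫⁻ r in Ioi (0 : ℝ), ENNReal.ofReal (2 * r / (1 + r ^ 2) ^ 2 *
      (1 / 2 * Real.log (1 + a ^ 2) + 1 / 2 * Real.log (1 + r ^ 2) - Real.log (max r a)))
      = ENNReal.ofReal (1 / 2) := by
  set c := Real.log (1 + a ^ 2) with hc
  set φ : ℝ → ℝ := fun r => 2 * r / (1 + r ^ 2) ^ 2 *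
      (1 / 2 * c + 1 / 2 * Real.log (1 + r ^ 2) - Real.log (max r a)) with hφ
  have hp : ∀ r ∈ Ioi (0 : ℝ), 0 ≤ φ r := fun r hr => by
    have hr : 0 < r := hr
    have := half_log_one_add_sq_add_sub_log_nonneg (d := max r a) ha hr.le
      (hr.le.trans (le_max_left _ _)) (max_le (by linarith) (by linarith))
    exact mul_nonneg (by positivity) this
  -- the inner part `0 < r ≤ a`
  have hφ1 : EqOn (fun r => 2 * r / (1 + r ^ 2) ^ 2 *
      (1 / 2 * c + 1 / 2 * Real.log (1 + r ^ 2) - Real.log a)) φ (Ioc 0 a) := fun r hr => by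
    simp only [hφ, max_eq_right hr.2]
  have hcont1 : Continuous (fun r : ℝ => 2 * r / (1 + r ^ 2) ^ 2 *
      (1 / 2 * c + 1 / 2 * Real.log (1 + r ^ 2) - Real.log a)) := by
    have h1 : ∀ r : ℝ, 1 + r ^ 2 ≠ 0 := fun r => by positivity
    fun_prop (disch := simp [h1])
  have hi1 : IntegrableOn φ (Ioc 0 a) :=
    (hcont1.integrableOn_Ioc).congr_fun hφ1 measurableSet_Ioc
  have hv1 : ∫ r in Ioc 0 a, φ r = (1 / 2 * c - Real.log a) * (1 - (1 + a ^ 2)⁻¹)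
      + 1 / 2 * (1 - (c * (1 + a ^ 2)⁻¹ + (1 + a ^ 2)⁻¹)) := by
    rw [← setIntegral_congr_fun measurableSet_Ioc hφ1, ← intervalIntegral.integral_of_le ha,
      intervalIntegral.integral_eq_sub_of_hasDerivAt
        (f := fun r => -(1 / 2 * c - Real.log a) * (1 + r ^ 2)⁻¹
          + 1 / 2 * -(Real.log (1 + r ^ 2) * (1 + r ^ 2)⁻¹ + (1 + r ^ 2)⁻¹))
        (fun r _ => ?_) (hcont1.intervalIntegrable _ _)]
    · simp only [← hc]
      norm_num
      ring
    · exact (((hasDerivAt_one_add_sq_inv r).const_mul _).add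
        ((hasDerivAt_radial_log r).const_mul _)).congr_deriv (by ring)
  -- the outer part `a < r`
  set F : ℝ → ℝ := fun r => -(1 / 2 * c + 1 / 2) * (1 + r ^ 2)⁻¹
      + r * (r * (1 / 2 * Real.log (1 + r ^ 2)) - r * Real.log r) * (1 + r ^ 2)⁻¹ with hF
  have hFd : ∀ r ∈ Ioi a, HasDerivAt F (φ r) r := fun r hr => by
    have hr0 : 0 < r := ha.trans_lt hr
    refine (((hasDerivAt_one_add_sq_inv r).const_mul (-(1 / 2 * c + 1 / 2))).add
      (((hasDerivAt_id r).mul (((hasDerivAt_id r).mul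
        ((hasDerivAt_log_one_add_sq r).const_mul (1 / 2))).sub
        ((hasDerivAt_id r).mul (Real.hasDerivAt_log hr0.ne')))).mul
        (hasDerivAt_one_add_sq_inv r))).congr_deriv ?_
    simp only [hφ, max_eq_left (le_of_lt (mem_Ioi.1 hr)), id]
    simp
    field_simp
    ring
  have hFc : ContinuousWithinAt F (Ici a) a := by
    have h1 : ∀ r : ℝ, 1 + r ^ 2 ≠ 0 := fun r => by positivity
    have h2 := Real.continuous_mul_log
    have : Continuous F := by
      fun_prop (disch := simp [h1])
    exact this.continuousWithinAt
  have hFl : Tendsto F atTop (𝓝 0) := by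
    have h1 : Tendsto (fun r : ℝ => -(1 / 2 * c + 1 / 2) * (1 + r ^ 2)⁻¹
        + (1 - (1 + r ^ 2)⁻¹) * (1 / 2 * Real.log (1 + r ^ 2) - Real.log r)) atTop (𝓝 0) := by
      simpa using (tendsto_one_add_sq_inv.const_mul (-(1 / 2 * c + 1 / 2))).add
        ((tendsto_one_add_sq_inv.const_sub 1).mul tendsto_half_log_one_add_sq_sub_log)
    refine h1.congr fun r => ?_
    simp only [hF]
    field_simp
    ring
  have hp2 : ∀ r ∈ Ioi a, 0 ≤ φ r := fun r hr => hp r (ha.trans_lt hr)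
  have hi2 := integrableOn_Ioi_deriv_of_nonneg hFc hFd hp2 hFl
  have hv2 := integral_Ioi_of_hasDerivAt_of_nonneg hFc hFd hp2 hFl
  have hu : Ioc 0 a ∪ Ioi a = Ioi 0 := Ioc_union_Ioi_eq_Ioi ha
  have hi : IntegrableOn φ (Ioi 0) := hu ▸ hi1.union hi2
  rw [← ofReal_integral_eq_lintegral_ofReal hi
    ((ae_restrict_iff' measurableSet_Ioi).2 (Eventually.of_forall hp)), ← hu,
    setIntegral_union Ioc_disjoint_Ioi_same measurableSet_Ioi hi1 hi2, hv1, hv2]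
  congr 1
  simp only [hF, ← hc]
  field_simp
  ring

lemma lintegral_complex_energy (x : ℂ) :
    ∫⁻ y : ℂ, ENNReal.ofReal (1 / (π * (1 + ‖y‖ ^ 2) ^ 2) * (1 / 2 * Real.log (1 + ‖x‖ ^ 2)
      + 1 / 2 * Real.log (1 + ‖y‖ ^ 2) - Real.log ‖y - x‖)) = ENNReal.ofReal (1 / 2) := by
  rw [← Complex.lintegral_comp_polarCoord_symm, ← lintegral_radial_energy (norm_nonneg x)]
  have hsymm : ∀ p : ℝ × ℝ, Complex.polarCoord.symm p = circleMap 0 p.1 p.2 := fun p => by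
    simp [Complex.polarCoord_symm_apply, circleMap, Complex.exp_mul_I]
  have htarget : polarCoord.target = Ioi (0 : ℝ) ×ˢ Ioo (-π) π := rfl
  simp_rw [hsymm, norm_circleMap_zero, sq_abs, smul_eq_mul]
  have hm : Measurable (fun p : ℝ × ℝ => circleMap 0 p.1 p.2) := by
    unfold circleMap
    fun_prop
  rw [htarget, Measure.volume_eq_prod, ← Measure.prod_restrict, lintegral_prod _ (by fun_prop)]
  refine setLIntegral_congr_fun measurableSet_Ioi fun r (hr : 0 < r) => ?_
  simp only
  simp_rw [ENNReal.ofReal_mul (show 0 ≤ 1 / (π * (1 + r ^ 2) ^ 2) by positivity)]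
  rw [lintegral_const_mul' _ _ ENNReal.ofReal_ne_top,
    lintegral_const_mul' _ _ ENNReal.ofReal_ne_top, lintegral_angular hr,
    ← ENNReal.ofReal_mul (by positivity), ← ENNReal.ofReal_mul hr.le]
  congr 1
  field_simp

lemma lintegral_energy (x : E2) :
    ∫⁻ y : E2, ENNReal.ofReal (mu2 y * (1 / 2 * Real.log (1 + ‖x‖ ^ 2)
      + 1 / 2 * Real.log (1 + ‖y‖ ^ 2) - Real.log ‖x - y‖)) = ENNReal.ofReal (1 / 2) := by
  let e : ℂ ≃ₗᵢ[ℝ] E2 := Complex.orthonormalBasisOneI.repr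
  have hx : ‖e.symm x‖ = ‖x‖ := e.symm.norm_map x
  rw [← lintegral_complex_energy (e.symm x),
    ← e.measurePreserving.lintegral_comp_emb e.toHomeomorph.measurableEmbedding]
  refine lintegral_congr fun y => ?_
  have hy : ‖x - e y‖ = ‖y - e.symm x‖ := by
    rw [← e.norm_map (y - e.symm x), map_sub, e.apply_symm_apply, norm_sub_rev]
  rw [hx, hy, mu2, e.norm_map]

lemma lintegral_prod_energy :
    ∫⁻ p : E2 × E2, ENNReal.ofReal (mu2 p.1 * (mu2 p.2 * (1 / 2 * Real.log (1 + ‖p.1‖ ^ 2)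
      + 1 / 2 * Real.log (1 + ‖p.2‖ ^ 2) - Real.log ‖p.1 - p.2‖))) = ENNReal.ofReal (1 / 2) := by
  have hm : Measurable mu2 := by
    unfold mu2
    fun_prop
  rw [Measure.volume_eq_prod, lintegral_prod _ (by fun_prop)]
  have h : ∀ x : E2, ∫⁻ y : E2, ENNReal.ofReal (mu2 x * (mu2 y * (1 / 2 * Real.log (1 + ‖x‖ ^ 2)
      + 1 / 2 * Real.log (1 + ‖y‖ ^ 2) - Real.log ‖x - y‖)))
      = ENNReal.ofReal (mu2 x) * ENNReal.ofReal (1 / 2) := fun x => by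
    simp_rw [fun y => ENNReal.ofReal_mul (q := mu2 y * (1 / 2 * Real.log (1 + ‖x‖ ^ 2)
      + 1 / 2 * Real.log (1 + ‖y‖ ^ 2) - Real.log ‖x - y‖)) (mu2_nonneg x)]
    rw [lintegral_const_mul' _ _ ENNReal.ofReal_ne_top, lintegral_energy]
  simp_rw [h]
  rw [lintegral_mul_const' _ _ ENNReal.ofReal_ne_top,
    ← ofReal_integral_eq_lintegral_ofReal integrable_mu2 (Eventually.of_forall mu2_nonneg),
    integral_mu2, ENNReal.ofReal_one, one_mul]

/-- The logarithmic self-energy of `μ`. -/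
lemma integral_mu2_mul_mu2_mul_log_norm_sub :
    ∫ p : E2 × E2, mu2 p.1 * mu2 p.2 * Real.log ‖p.1 - p.2‖ = 1 / 2 := by
  have hm : Measurable mu2 := by
    unfold mu2
    fun_prop
  set G : E2 × E2 → ℝ := fun p => mu2 p.1 * (mu2 p.2 * (1 / 2 * Real.log (1 + ‖p.1‖ ^ 2)
      + 1 / 2 * Real.log (1 + ‖p.2‖ ^ 2) - Real.log ‖p.1 - p.2‖)) with hG
  have hGm : Measurable G := by fun_prop
  have hG0 : ∀ p, 0 ≤ G p := fun p => mul_nonneg (mu2_nonneg _) (mul_nonneg (mu2_nonneg _)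
    (half_log_one_add_sq_add_sub_log_nonneg (norm_nonneg _) (norm_nonneg _) (norm_nonneg _)
      (norm_sub_le _ _)))
  have hGi : Integrable G := by
    refine ⟨hGm.aestronglyMeasurable, ?_⟩
    rw [hasFiniteIntegral_iff_ofReal (Eventually.of_forall hG0), lintegral_prod_energy]
    exact ENNReal.ofReal_lt_top
  have hGv : ∫ p, G p = 1 / 2 := by
    rw [integral_eq_lintegral_of_nonneg_ae (Eventually.of_forall hG0) hGm.aestronglyMeasurable,
      lintegral_prod_energy, ENNReal.toReal_ofReal (by norm_num)]
  have h1 : Integrable (fun p : E2 × E2 => mu2 p.1 * Real.log (1 + ‖p.1‖ ^ 2) * mu2 p.2) :=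
    integrable_mu2_mul_log.mul_prod integrable_mu2
  have h2 : Integrable (fun p : E2 × E2 => mu2 p.1 * (mu2 p.2 * Real.log (1 + ‖p.2‖ ^ 2))) :=
    integrable_mu2.mul_prod integrable_mu2_mul_log
  have v1 : ∫ p : E2 × E2, mu2 p.1 * Real.log (1 + ‖p.1‖ ^ 2) * mu2 p.2 = 1 := by
    rw [Measure.volume_eq_prod,
      integral_prod_mul (fun x => mu2 x * Real.log (1 + ‖x‖ ^ 2)) mu2,
      integral_mu2_mul_log, integral_mu2, one_mul]
  have v2 : ∫ p : E2 × E2, mu2 p.1 * (mu2 p.2 * Real.log (1 + ‖p.2‖ ^ 2)) = 1 := by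
    rw [Measure.volume_eq_prod,
      integral_prod_mul mu2 (fun x => mu2 x * Real.log (1 + ‖x‖ ^ 2)),
      integral_mu2_mul_log, integral_mu2, one_mul]
  have h : (fun p : E2 × E2 => mu2 p.1 * mu2 p.2 * Real.log ‖p.1 - p.2‖)
      = fun p => 1 / 2 * (mu2 p.1 * Real.log (1 + ‖p.1‖ ^ 2) * mu2 p.2)
        + 1 / 2 * (mu2 p.1 * (mu2 p.2 * Real.log (1 + ‖p.2‖ ^ 2))) - G p := by
    ext p
    simp only [hG]
    ring
  have h12 : Integrable (fun p : E2 × E2 =>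
      1 / 2 * (mu2 p.1 * Real.log (1 + ‖p.1‖ ^ 2) * mu2 p.2)
        + 1 / 2 * (mu2 p.1 * (mu2 p.2 * Real.log (1 + ‖p.2‖ ^ 2)))) :=
    (h1.const_mul _).add (h2.const_mul _)
  rw [h, integral_sub h12 hGi,
    integral_add (h1.const_mul _) (h2.const_mul _), integral_const_mul, integral_const_mul,
    v1, v2, hGv]
  norm_num

/-- The function f⋆ = M μ realizes the equality case in the generalized
logarithmic Hardy–Littlewood–Sobolev inequality. -/
theorem log_HLS_equality_case (α M : ℝ) (hα : 0 ≤ α) (hM : 0 < M) :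
    (∫ x, (M * mu2 x) * Real.log (M * mu2 x / M)) + α * (∫ x, Vpot x * (M * mu2 x))
        + M * (1 - α) * (1 + Real.log π)
      = (2 / M) * (α - 1) *
          ∫ p : E2 × E2, (M * mu2 p.1) * (M * mu2 p.2) * Real.log ‖p.1 - p.2‖ := by
  have h1 : ∀ x, M * mu2 x * Real.log (M * mu2 x / M) = -M * (Vpot x * mu2 x) := fun x => by
    rw [mul_div_cancel_left₀ _ hM.ne', log_mu2]
    ring
  have h2 : ∀ x, Vpot x * (M * mu2 x) = M * (Vpot x * mu2 x) := fun x => by ring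
  have h3 : ∀ p : E2 × E2, M * mu2 p.1 * (M * mu2 p.2) * Real.log ‖p.1 - p.2‖
      = M ^ 2 * (mu2 p.1 * mu2 p.2 * Real.log ‖p.1 - p.2‖) := fun p => by ring
  simp_rw [h1, h2, h3]
  rw [integral_const_mul, integral_const_mul, integral_const_mul, integral_Vpot_mul_mu2,
    integral_mu2_mul_mu2_mul_log_norm_sub]
  field_simp
  ring
end
end
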